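/- arXiv:2509.22988 — 4 statements merged into one kernel-verified Lean document; each statement's English description precedes it below -/
import Mathlib

section
/- Let R be a commutative noetherian ring, M an R-module, and f1, f2 ∈ R. If M is (f1,f2)-torsion, then Supp(H^1(K^•(f1,f2;M))) = Supp((0:_M f1)/f2(0:_M f1)) ∪ Supp((f1M :_M f2)/f1M). -/
open scoped Pointwise

/-- Let `R` be a commutative noetherian ring, `M` an `(f1,f2)`-torsion `R`-module. Then
`Supp H^1(K^•(f1,f2;M)) = Supp ((0 :_M f1)/f2(0 :_M f1)) ∪ Supp ((f1 M :_M f2)/f1 M)`,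
where `H^1(K^•(f1,f2;M)) = ker((a,b) ↦ -f2 a + f1 b) / im(z ↦ (f1 z, f2 z))`. -/
theorem stmt_0 {R : Type*} [CommRing R] [IsNoetherianRing R]
    {M : Type*} [AddCommGroup M] [Module R M] (f1 f2 : R)
    (htor : ∀ z : M, ∃ n : ℕ, f1 ^ n • z = 0 ∧ f2 ^ n • z = 0) :
    Module.support R
        (↥(LinearMap.ker (f1 • LinearMap.snd R M M - f2 • LinearMap.fst R M M)) ⧸
          Submodule.comap
            (LinearMap.ker (f1 • LinearMap.snd R M M - f2 • LinearMap.fst R M M)).subtype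
            (LinearMap.range
              (LinearMap.prod ((LinearMap.lsmul R M) f1) ((LinearMap.lsmul R M) f2)))) =
      Module.support R
          (↥(LinearMap.ker ((LinearMap.lsmul R M) f1)) ⧸
            (f2 • (⊤ : Submodule R ↥(LinearMap.ker ((LinearMap.lsmul R M) f1))))) ∪
        Module.support R
          (↥(Submodule.comap ((LinearMap.lsmul R M) f2) (f1 • (⊤ : Submodule R M))) ⧸
            Submodule.comap
              (Submodule.comap ((LinearMap.lsmul R M) f2)
                (f1 • (⊤ : Submodule R M))).subtype
              (f1 • (⊤ : Submodule R M))) := by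
  classical
  set K := LinearMap.ker (f1 • LinearMap.snd R M M - f2 • LinearMap.fst R M M) with hK
  set A := LinearMap.ker ((LinearMap.lsmul R M) f1) with hA
  set C := Submodule.comap ((LinearMap.lsmul R M) f2) (f1 • (⊤ : Submodule R M)) with hC
  have memK : ∀ x : M × M, x ∈ K ↔ f1 • x.2 = f2 • x.1 := by
    intro x
    simp [hK, LinearMap.mem_ker, sub_eq_zero]
  have memA : ∀ x : M, x ∈ A ↔ f1 • x = 0 := by
    intro x
    simp [hA, LinearMap.mem_ker]
  have memS : ∀ x : M, x ∈ f1 • (⊤ : Submodule R M) ↔ ∃ z, f1 • z = x := by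
    intro x
    simp [Submodule.mem_smul_pointwise_iff_exists]
  have memC : ∀ x : M, x ∈ C ↔ ∃ z, f1 • z = f2 • x := by
    intro x
    rw [hC, Submodule.mem_comap, memS]
    rfl
  let g0 : A →ₗ[R] K := ((LinearMap.inr R M M).comp A.subtype).codRestrict K (by
    intro x
    rw [memK]
    simpa using (memA x).1 x.2)
  let h0 : K →ₗ[R] C := ((LinearMap.fst R M M).comp K.subtype).codRestrict C (by
    intro x
    rw [memC]
    exact ⟨x.1.2, (memK x).1 x.2⟩)
  have hg0 : ∀ x : A, (g0 x : M × M) = (0, (x : M)) := fun x => rfl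
  have hh0 : ∀ x : K, (h0 x : M) = (x : M × M).1 := fun x => rfl
  set B := Submodule.comap K.subtype (LinearMap.range
    (LinearMap.prod ((LinearMap.lsmul R M) f1) ((LinearMap.lsmul R M) f2))) with hB
  have memB : ∀ x : K, x ∈ B ↔ ∃ z, f1 • z = (x : M × M).1 ∧ f2 • z = (x : M × M).2 := by
    intro x
    simp [hB, LinearMap.mem_range, Prod.ext_iff]
  have memA2 : ∀ x : A, x ∈ f2 • (⊤ : Submodule R A) ↔ ∃ z : A, f2 • z = x := by
    intro x
    simp [Submodule.mem_smul_pointwise_iff_exists]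
  have memD : ∀ x : C, x ∈ Submodule.comap C.subtype (f1 • (⊤ : Submodule R M)) ↔
      ∃ z, f1 • z = (x : M) := fun x => memS x
  have hgB : f2 • (⊤ : Submodule R A) ≤ B.comap g0 := by
    intro x hx
    obtain ⟨z, rfl⟩ := (memA2 x).1 hx
    rw [Submodule.mem_comap, memB]
    exact ⟨z, (memA z).1 z.2, rfl⟩
  have hhD : B ≤ (Submodule.comap C.subtype (f1 • (⊤ : Submodule R M))).comap h0 := by
    intro x hx
    obtain ⟨z, h1, h2⟩ := (memB x).1 hx
    rw [Submodule.mem_comap, memD]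
    exact ⟨z, h1⟩
  refine Module.support_of_exact (f := Submodule.mapQ _ _ g0 hgB)
    (g := Submodule.mapQ _ _ h0 hhD) ?_ ?_ ?_
  · intro y
    obtain ⟨x, rfl⟩ := Submodule.Quotient.mk_surjective _ y
    constructor
    · intro h
      rw [Submodule.mapQ_apply, Submodule.Quotient.mk_eq_zero, memD] at h
      obtain ⟨z, hz⟩ := h
      rw [hh0] at hz
      have hx := (memK x).1 x.2
      refine ⟨Submodule.Quotient.mk ⟨(x : M × M).2 - f2 • z, ?_⟩, ?_⟩
      · rw [memA, smul_sub, hx, ← hz, smul_comm, sub_self]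
      · rw [Submodule.mapQ_apply, Submodule.Quotient.eq, memB]
        refine ⟨-z, ?_, ?_⟩
        · simp [hg0, hz]
        · simp [hg0]
    · rintro ⟨w, hw⟩
      obtain ⟨a, rfl⟩ := Submodule.Quotient.mk_surjective _ w
      rw [← hw, Submodule.mapQ_apply, Submodule.mapQ_apply, Submodule.Quotient.mk_eq_zero, memD]
      exact ⟨0, by simp [hh0, hg0]⟩
  · rw [injective_iff_map_eq_zero]
    intro w hw
    obtain ⟨a, rfl⟩ := Submodule.Quotient.mk_surjective _ w
    rw [Submodule.mapQ_apply, Submodule.Quotient.mk_eq_zero, memB] at hw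
    obtain ⟨z, h1, h2⟩ := hw
    rw [Submodule.Quotient.mk_eq_zero, memA2]
    exact ⟨⟨z, (memA z).2 h1⟩, Subtype.ext h2⟩
  · intro y
    obtain ⟨c, rfl⟩ := Submodule.Quotient.mk_surjective _ y
    obtain ⟨b, hb⟩ := (memC c).1 c.2
    exact ⟨Submodule.Quotient.mk ⟨((c : M), b), (memK _).2 hb⟩, rfl⟩
end

section
/- Let R be a noetherian regular ring of prime characteristic p, and let F denote the Peskine–Szpiro (Frobenius) functor F(M) = R^{(1)} ⊗_R M, where R^{(1)} is R with right R-action r'·r = r^p r'. Then for every g ∈ R, F(R·(1/g)) ≅ R·(1/g^p) as R-modules, where R·(1/g^n) denotes the cyclic R-submodule of the localization R_g generated by 1/g^n. -/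
open IsLocalRing

/-- A noetherian local ring is regular if its Krull dimension equals the dimension of its
cotangent space over the residue field. -/
def IsRegularLocalRingStmt (A : Type u) [CommRing A] [IsLocalRing A] : Prop :=
  ringKrullDim A = (Module.finrank (ResidueField A) (CotangentSpace A) : WithBot (WithTop ℕ))

/-- A commutative ring is regular if it is noetherian and all of its localizations at
primes are regular local rings. -/
def IsRegularRingStmt (R : Type u) [CommRing R] : Prop :=
  IsNoetherianRing R ∧
    ∀ (P : Ideal R) [P.IsPrime], IsRegularLocalRingStmt (Localization.AtPrime P)

theorem spanFinrank_quot_aux {A : Type u} [CommRing A] [IsLocalRing A] [IsNoetherianRing A]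
    (d : ℕ) (hd : (maximalIdeal A).spanFinrank = d + 1)
    (x : A) (hx : x ∈ maximalIdeal A) (hx2 : x ∉ maximalIdeal A ^ 2) [IsLocalRing (A ⧸ Ideal.span {x})] :
    (maximalIdeal (A ⧸ Ideal.span {x})).spanFinrank ≤ d := by
  classical
  rw [spanFinrank_maximalIdeal_eq_finrank_cotangentSpace] at hd
  set xb : CotangentSpace A := (maximalIdeal A).toCotangent ⟨x, hx⟩ with hxb
  have hne : xb ≠ 0 := by
    rw [hxb, Ne, Ideal.toCotangent_eq_zero]; exact hx2
  have hli : LinearIndepOn (ResidueField A) id ({xb} : Set (CotangentSpace A)) :=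
    LinearIndepOn.singleton hne
  set b := hli.extend (Set.subset_univ _) with hb
  have hsub : {xb} ⊆ b := hli.subset_extend _
  have hbli := hli.linearIndepOn_extend (Set.subset_univ _)
  have hfin : b.Finite := hbli.setFinite
  have hspan : Submodule.span (ResidueField A) b = ⊤ := by
    rw [hb, hli.span_extend_eq_span]; simp
  have hcard : b.ncard = d + 1 := by
    rw [← hd]
    have B := Module.Basis.extend hli
    have : Fintype b := hfin.fintype
    rw [Module.finrank_eq_card_basis (ι := b) B, Set.ncard_eq_toFinset_card', Set.toFinset_card]
  obtain ⟨σ, hσ⟩ := (maximalIdeal A).toCotangent_surjective.hasRightInverse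
  set t := b \ {xb} with ht
  have htc : t.ncard = d := by
    rw [ht, Set.ncard_sdiff_singleton_of_mem (hsub rfl), hcard]; rfl
  have htf : t.Finite := hfin.subset Set.sdiff_subset
  set s : Set (maximalIdeal A) := insert ⟨x, hx⟩ (σ '' t) with hs
  have him : (maximalIdeal A).toCotangent '' s = b := by
    rw [hs, Set.image_insert_eq, ← Set.image_comp]
    have : ((maximalIdeal A).toCotangent ∘ σ) '' t = t := by
      rw [show ((maximalIdeal A).toCotangent ∘ σ) = id from funext hσ, Set.image_id]
    rw [this, ht, ← hxb, Set.insert_sdiff_singleton, Set.insert_eq_of_mem (hsub rfl)]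
  have h1 : Submodule.span A s = ⊤ := by
    rw [← CotangentSpace.span_image_eq_top_iff, him, hspan]
  have h2 : Ideal.span ((↑) '' s : Set A) = maximalIdeal A := by
    have := congrArg (Submodule.map (maximalIdeal A).subtype) h1
    rw [Submodule.map_span, Submodule.map_top, Submodule.range_subtype] at this
    exact this
  have h3 : maximalIdeal (A ⧸ Ideal.span {x}) =
      Ideal.span (Ideal.Quotient.mk (Ideal.span {x}) '' ((↑) '' (σ '' t))) := by
    have h4 : (maximalIdeal A).map (Ideal.Quotient.mk (Ideal.span {x})) =
        maximalIdeal (A ⧸ Ideal.span {x}) := by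
      exact IsLocalRing.map_maximalIdeal_of_surjective _ Ideal.Quotient.mk_surjective
    refine h4.symm.trans ((congrArg (Ideal.map _) h2.symm).trans ?_)
    rw [Ideal.map_span, hs, Set.image_insert_eq, Set.image_insert_eq]
    have : Ideal.Quotient.mk (Ideal.span {x}) x = 0 := by
      rw [Ideal.Quotient.eq_zero_iff_mem]; exact Ideal.mem_span_singleton_self x
    rw [this]
    exact Submodule.span_insert_zero
  rw [h3]
  refine (Submodule.spanFinrank_span_le_ncard_of_finite
    (((htf.image _).image _).image _)).trans ?_
  exact (Set.ncard_image_le ((htf.image _).image _)).trans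
    ((Set.ncard_image_le (htf.image _)).trans ((Set.ncard_image_le htf).trans htc.le))

theorem regular_isDomain_aux (d : ℕ) : ∀ (A : Type u) [CommRing A] [IsLocalRing A]
    [IsNoetherianRing A], (maximalIdeal A).spanFinrank = d → ringKrullDim A = d → IsDomain A := by
  induction d with
  | zero =>
    intro A _ _ _ h _
    rw [spanFinrank_maximalIdeal_eq_finrank_cotangentSpace,
      finrank_cotangentSpace_eq_zero_iff] at h
    exact h.isDomain
  | succ d ih =>
    intro A _ _ _ h hdim
    have hex : ∃ x ∈ maximalIdeal A, x ∉ maximalIdeal A ^ 2 ∧ ∀ Q ∈ minimalPrimes A, x ∉ Q := by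
      by_contra! hcon
      have hfin : (insert (maximalIdeal A ^ 2) (minimalPrimes A)).Finite :=
        (minimalPrimes.finite_of_isNoetherianRing A).insert _
      have := (Ideal.subset_union_prime_finite hfin (f := id) (I := maximalIdeal A)
        (maximalIdeal A ^ 2) (maximalIdeal A ^ 2) (by
          intro i hi hne _
          rcases hi with hi | hi
          · exact absurd hi hne
          · exact hi.1.1)).1 (by
          intro x hx
          by_cases h2 : x ∈ maximalIdeal A ^ 2
          · simp only [Set.mem_iUnion]
            exact ⟨_, Set.mem_insert _ _, h2⟩
          · obtain ⟨Q, hQ, hxQ⟩ := hcon x hx h2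
            simp only [Set.mem_iUnion]
            exact ⟨Q, Set.mem_insert_of_mem _ hQ, hxQ⟩)
      obtain ⟨i, hi, hle⟩ := this
      rcases hi with rfl | hi
      · have hb : maximalIdeal A = ⊥ := by
          apply Submodule.eq_bot_of_le_smul_of_le_jacobson_bot (maximalIdeal A) _
            (IsNoetherian.noetherian _) _ (IsLocalRing.jacobson_eq_maximalIdeal _ bot_ne_top).ge
          simpa [pow_two] using hle
        rw [hb] at h
        simp at h
      · have hiP : i.IsPrime := hi.1.1
        have heq : maximalIdeal A = i := le_antisymm hle (le_maximalIdeal hiP.ne_top)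
        have h0 : (maximalIdeal A).height = 0 := by
          rw [heq, Ideal.height_eq_zero_iff]; exact hi
        rw [← maximalIdeal_height_eq_ringKrullDim, h0] at hdim
        have : (0 : WithBot ℕ∞) = ((d + 1 : ℕ) : WithBot ℕ∞) := by simpa using hdim
        exact absurd this (by exact_mod_cast (Nat.succ_ne_zero d).symm)
    obtain ⟨x, hx, hx2, hxQ⟩ := hex
    have hne : Ideal.span {x} ≠ ⊤ := fun h => 
      (maximalIdeal.isMaximal A).ne_top (top_le_iff.1 (h ▸ (Ideal.span_singleton_le_iff_mem _).2 hx))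
    have : Nontrivial (A ⧸ Ideal.span {x}) := Ideal.Quotient.nontrivial_iff.2 hne
    have : IsLocalRing (A ⧸ Ideal.span {x}) :=
      IsLocalRing.of_surjective' (Ideal.Quotient.mk _) Ideal.Quotient.mk_surjective
    have hle := spanFinrank_quot_aux d h x hx hx2
    have hd1 : ((d + 1 : ℕ) : WithBot ℕ∞) ≤ ringKrullDim (A ⧸ Ideal.span {x}) + 1 := by
      rw [← hdim, ← maximalIdeal_height_eq_ringKrullDim]
      exact Ideal.height_le_ringKrullDim_quotient_add_one hx
    have hd2 := ringKrullDim_le_spanFinrank_maximalIdeal (A ⧸ Ideal.span {x})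
    obtain ⟨e, he⟩ : ∃ e : ℕ, ringKrullDim (A ⧸ Ideal.span {x}) = e := by
      have : FiniteRingKrullDim (A ⧸ Ideal.span {x}) := inferInstance
      obtain ⟨m, hm⟩ := WithBot.ne_bot_iff_exists.1
        (ringKrullDim_ne_bot (R := A ⧸ Ideal.span {x}))
      have : m ≠ ⊤ := by rintro rfl; exact ringKrullDim_ne_top hm.symm
      lift m to ℕ using this
      exact ⟨m, hm.symm⟩
    rw [he] at hd1 hd2
    have hd1' : d + 1 ≤ e + 1 := by exact_mod_cast hd1
    have hd2' : e ≤ (maximalIdeal (A ⧸ Ideal.span {x})).spanFinrank := by exact_mod_cast hd2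
    have hed : e = d := by omega
    have hdom := ih (A ⧸ Ideal.span {x}) (by omega) (by rw [he, hed])
    have hprime : (Ideal.span {x}).IsPrime := (Ideal.Quotient.isDomain_iff_prime _).1 hdom
    obtain ⟨Q, hQ, hQle⟩ := Ideal.exists_minimalPrimes_le (I := ⊥) (J := Ideal.span {x}) bot_le
    have hQP : Q.IsPrime := hQ.1.1
    have hxnQ := hxQ Q hQ
    have hQ0 : Q = ⊥ := by
      apply Submodule.eq_bot_of_le_smul_of_le_jacobson_bot (maximalIdeal A) _
            (IsNoetherian.noetherian _) _ (IsLocalRing.jacobson_eq_maximalIdeal _ bot_ne_top).ge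
      intro q hq
      obtain ⟨a, rfl⟩ := Ideal.mem_span_singleton'.1 (hQle hq)
      have ha : a ∈ Q := (hQP.mem_or_mem hq).resolve_right hxnQ
      rw [mul_comm]
      exact Submodule.smul_mem_smul hx ha
    rw [hQ0] at hQP
    exact IsDomain.of_bot_isPrime A


/-- In a regular ring of characteristic `p`, an element killed by a power of `g` lies in the
ideal generated by the `p`-th powers of such elements. -/
theorem frobenius_torsion_aux {R : Type u} [CommRing R] (p : ℕ)
    (hdom : ∀ (P : Ideal R) [P.IsPrime], IsDomain (Localization.AtPrime P)) (g : R) (r : R)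
    (hr : ∃ n : ℕ, g ^ n * r = 0) :
    r ∈ Ideal.span {y : R | ∃ j : R, (∃ n : ℕ, g ^ n * j = 0) ∧ y = j ^ p} := by
  set K := Ideal.span {y : R | ∃ j : R, (∃ n : ℕ, g ^ n * j = 0) ∧ y = j ^ p} with hK
  by_contra hrK
  set C : Ideal R := K.colon {r} with hC
  have hCne : C ≠ ⊤ := by
    intro h
    have h1 : (1 : R) ∈ C := h ▸ Submodule.mem_top
    rw [hC, Submodule.mem_colon_singleton] at h1
    exact hrK (by simpa using h1)
  obtain ⟨P, hPmax, hCP⟩ := Ideal.exists_le_maximal C hCne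
  have hPp : P.IsPrime := hPmax.isPrime
  have := hdom P
  obtain ⟨n, hn⟩ := hr
  have h0 : algebraMap R (Localization.AtPrime P) g ^ n * algebraMap R _ r = 0 := by
    rw [← map_pow, ← map_mul, hn, map_zero]
  rcases mul_eq_zero.1 h0 with h | h
  · have hg := eq_zero_of_pow_eq_zero h
    obtain ⟨⟨s, hs⟩, hsg⟩ := (IsLocalization.map_eq_zero_iff P.primeCompl _ _).1 hg
    have hsK : s ^ p ∈ K := Ideal.subset_span ⟨s, ⟨1, by simpa [mul_comm] using hsg⟩, rfl⟩
    have : s ^ p ∈ C := by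
      rw [hC, Submodule.mem_colon_singleton]
      exact K.mul_mem_right _ hsK
    exact hs (hPp.mem_of_pow_mem _ (hCP this))
  · obtain ⟨⟨s, hs⟩, hsg⟩ := (IsLocalization.map_eq_zero_iff P.primeCompl _ _).1 h
    apply hs
    apply hCP
    rw [hC, Submodule.mem_colon_singleton]
    have : s • r = 0 := hsg
    rw [this]
    exact K.zero_mem

open CategoryTheory in
/-- Universal property of extension of scalars. -/
theorem extendScalars_univ_aux {R : Type} [CommRing R] (σ : R →+* R) (M : ModuleCat.{0} R) :
    ∃ η : M →+ (ModuleCat.extendScalars σ).obj M,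
      (∀ (r : R) (m : M), η (r • m) = σ r • η m) ∧
      (∀ (N : ModuleCat.{0} R) (φ : M →ₛₗ[σ] N),
        ∃ f : (ModuleCat.extendScalars σ).obj M ⟶ N, ∀ m, f.hom (η m) = φ m) ∧
      (∀ (N : ModuleCat.{0} R) (f g : (ModuleCat.extendScalars σ).obj M ⟶ N),
        (∀ m, f.hom (η m) = g.hom (η m)) → f = g) := by
  let adj := ModuleCat.extendRestrictScalarsAdj.{0} σ
  refine ⟨(adj.unit.app M).hom.toAddMonoidHom, fun r m => (adj.unit.app M).hom.map_smul r m,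
    fun N φ => ⟨(adj.homEquiv M N).symm (ModuleCat.semilinearMapAddEquiv σ M N φ), fun m => ?_⟩,
    fun N f g h => ?_⟩
  · have := (adj.homEquiv M N).apply_symm_apply (ModuleCat.semilinearMapAddEquiv σ M N φ)
    rw [Adjunction.homEquiv_unit] at this
    exact congrArg (fun k => k.hom m) this
  · apply (adj.homEquiv M N).injective
    rw [Adjunction.homEquiv_unit, Adjunction.homEquiv_unit]
    apply ModuleCat.hom_ext
    apply LinearMap.ext
    intro m
    exact h m

open CategoryTheory in
/-- Comparison of cyclic modules: an object `FM` with the universal property of the Frobenius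
pullback of the cyclic module `M = R u₀` is isomorphic to `N = R v₀`. -/
theorem cyclic_iso_aux {R : Type} [CommRing R] (σ : R →+* R) (M FM N : ModuleCat.{0} R)
    (η : M →+ FM) (hη : ∀ (r : R) (m : M), η (r • m) = σ r • η m)
    (hex : ∀ (N : ModuleCat.{0} R) (φ : M →ₛₗ[σ] N), ∃ f : FM ⟶ N, ∀ m, f.hom (η m) = φ m)
    (huniq : ∀ (N : ModuleCat.{0} R) (f g : FM ⟶ N),
      (∀ m, f.hom (η m) = g.hom (η m)) → f = g)
    (u0 : M) (v0 : N) (hM : ∀ m : M, ∃ a : R, a • u0 = m) (hN : ∀ n : N, ∃ a : R, a • v0 = n)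
    (φ : M →ₛₗ[σ] N) (hφ : φ u0 = v0)
    (hker : ∀ r : R, r • v0 = 0 → r ∈ Ideal.span {y : R | ∃ j : R, j • u0 = 0 ∧ y = σ j}) :
    Nonempty (FM ≅ N) := by
  obtain ⟨f, hf⟩ := hex N φ
  let ψ : R →ₗ[R] N := LinearMap.toSpanSingleton R N v0
  have hψ : Function.Surjective ψ := hN
  have hle : LinearMap.ker ψ ≤ LinearMap.ker (LinearMap.toSpanSingleton R FM (η u0)) := by
    intro r hr
    have h1 : Ideal.span {y : R | ∃ j : R, j • u0 = 0 ∧ y = σ j} ≤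
        LinearMap.ker (LinearMap.toSpanSingleton R FM (η u0)) := by
      rw [Ideal.span_le]
      rintro y ⟨j, hj, rfl⟩
      change σ j • η u0 = 0
      rw [← hη, hj, map_zero]
    exact h1 (hker r hr)
  let gl : N →ₗ[R] FM := ((LinearMap.ker ψ).liftQ _ hle).comp
    (ψ.quotKerEquivOfSurjective hψ).symm.toLinearMap
  have hgl : ∀ a : R, gl (a • v0) = a • η u0 := by
    intro a
    have : (ψ.quotKerEquivOfSurjective hψ).symm (ψ a) = Submodule.Quotient.mk a := by
      rw [LinearEquiv.symm_apply_eq]; rfl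
    change ((LinearMap.ker ψ).liftQ _ hle) ((ψ.quotKerEquivOfSurjective hψ).symm (ψ a)) = _
    rw [this]; rfl
  refine ⟨⟨f, ModuleCat.ofHom gl, ?_, ?_⟩⟩
  · apply huniq
    intro m
    obtain ⟨a, rfl⟩ := hM m
    change gl (f.hom (η (a • u0))) = η (a • u0)
    rw [hf, map_smulₛₗ, hφ, hgl, hη]
  · apply ModuleCat.hom_ext
    apply LinearMap.ext
    intro n
    obtain ⟨a, rfl⟩ := hN n
    change f.hom (gl (a • v0)) = a • v0
    rw [hgl, map_smul, hf, hφ]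

open CategoryTheory in
theorem frobenius_iso_aux {R L : Type} [CommRing R] [CommRing L] [Algebra R L] (p : ℕ)
    [Fact p.Prime] [CharP R p] (u : L)
    (hker : ∀ r : R, r • u ^ p = 0 →
      r ∈ Ideal.span {y : R | ∃ j : R, j • u = 0 ∧ y = j ^ p}) :
    Nonempty
      ((ModuleCat.extendScalars (frobenius R p)).obj (ModuleCat.of R ↥(Submodule.span R {u})) ≅
        ModuleCat.of R ↥(Submodule.span R {u ^ p})) := by
  have hp0 : (p : L) = 0 := by
    rw [← map_natCast (algebraMap R L), CharP.cast_eq_zero, map_zero]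
  have hmem : ∀ m ∈ Submodule.span R {u}, m ^ p ∈ Submodule.span R {u ^ p} := by
    intro m hm
    obtain ⟨a, rfl⟩ := Submodule.mem_span_singleton.1 hm
    rw [smul_pow]
    exact Submodule.smul_mem _ _ (Submodule.mem_span_singleton_self _)
  let φ : ↥(Submodule.span R {u}) →ₛₗ[frobenius R p] ↥(Submodule.span R {u ^ p}) :=
    { toFun := fun m => ⟨m.1 ^ p, hmem m.1 m.2⟩
      map_add' := by
        intro a b
        apply Subtype.ext
        obtain ⟨r, hr⟩ := exists_add_pow_prime_eq (Fact.out : p.Prime) a.1 b.1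
        rw [hp0] at hr
        simpa using hr
      map_smul' := by
        intro r a
        apply Subtype.ext
        exact smul_pow r a.1 p }
  obtain ⟨η, hη, hex, huniq⟩ := extendScalars_univ_aux (frobenius R p)
    (ModuleCat.of R ↥(Submodule.span R {u}))
  refine cyclic_iso_aux (frobenius R p) _ _ _ η hη hex huniq
    (⟨u, Submodule.mem_span_singleton_self u⟩ : Submodule.span R {u})
    (⟨u ^ p, Submodule.mem_span_singleton_self _⟩ : Submodule.span R {u ^ p}) ?_ ?_ φ rfl ?_
  · rintro ⟨n, hn⟩
    obtain ⟨a, rfl⟩ := Submodule.mem_span_singleton.1 hn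
    exact ⟨a, rfl⟩
  · rintro ⟨n, hn⟩
    obtain ⟨a, rfl⟩ := Submodule.mem_span_singleton.1 hn
    exact ⟨a, rfl⟩
  · intro r hr
    have h := hker r (congrArg Subtype.val hr)
    refine Ideal.span_mono ?_ h
    rintro y ⟨j, hj, rfl⟩
    exact ⟨j, Subtype.ext hj, rfl⟩

/-- For a noetherian regular ring `R` of prime characteristic `p` and the Peskine–Szpiro
functor `F = R^{(1)} ⊗_R –` (extension of scalars along the Frobenius), for every `g ∈ R`
one has `F(R·(1/g)) ≅ R·(1/g^p)`, where `R·(1/g^n)` is the cyclic `R`-submodule of the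
localization `R_g` generated by `1/g^n`. -/
theorem stmt_2 {R : Type} [CommRing R] (p : ℕ) [Fact p.Prime] [CharP R p]
    (hreg : IsRegularRingStmt R) (g : R) :
    Nonempty
      ((ModuleCat.extendScalars (frobenius R p)).obj
          (ModuleCat.of R
            ↥(Submodule.span R
              {IsLocalization.Away.invSelf (S := Localization.Away g) g})) ≅
        ModuleCat.of R
          ↥(Submodule.span R
            {(IsLocalization.Away.invSelf (S := Localization.Away g) g) ^ p})) := by
  have := hreg.1
  have hdom : ∀ (P : Ideal R) [P.IsPrime], IsDomain (Localization.AtPrime P) := by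
    intro P _
    have : IsNoetherianRing (Localization.AtPrime P) :=
      IsLocalization.isNoetherianRing P.primeCompl _ hreg.1
    refine regular_isDomain_aux _ (Localization.AtPrime P) rfl ?_
    rw [spanFinrank_maximalIdeal_eq_finrank_cotangentSpace]
    exact hreg.2 P
  set u := IsLocalization.Away.invSelf (S := Localization.Away g) g with hu
  have hgu : algebraMap R (Localization.Away g) g * u = 1 :=
    IsLocalization.Away.mul_invSelf g
  have hz : ∀ (k : ℕ) (r : R), r • u ^ k = 0 ↔ ∃ n : ℕ, g ^ n * r = 0 := by
    intro k r
    have hunit : IsUnit (u ^ k) := (IsUnit.of_mul_eq_one_right _ hgu).pow k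
    rw [Algebra.smul_def, hunit.mul_left_eq_zero,
      IsLocalization.map_eq_zero_iff (Submonoid.powers g)]
    constructor
    · rintro ⟨⟨_, n, rfl⟩, h⟩
      exact ⟨n, h⟩
    · rintro ⟨n, h⟩
      exact ⟨⟨_, n, rfl⟩, h⟩
  apply frobenius_iso_aux
  intro r hr
  have h := frobenius_torsion_aux p hdom g r ((hz p r).1 hr)
  have hz1 : ∀ r : R, r • u = 0 ↔ ∃ n : ℕ, g ^ n * r = 0 := by
    intro r
    rw [← hz 1 r, pow_one]
  simpa only [hz1] using h
end

section
/- Let R be a noetherian regular ring of prime characteristic p, M a finitely generated R-module with an injective map β: M → F(M) (a root of the F-finite F-module M_∞ = colim F^e(M)), and f1,…,fc ∈ R. Then Supp(H^0(K^•(f1,…,fc; M_∞))), i.e. Supp(∩_{j=1}^c ker(f_j : M_∞ → M_∞)), is a Zariski-closed subset of Spec R. -/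
open CategoryTheory IsLocalRing

/-- Iterates of the Peskine–Szpiro (Frobenius) functor `F(M) = R^{(1)} ⊗_R M`. -/
noncomputable def Fpow (R : Type) [CommRing R] (p : ℕ) [Fact p.Prime] [CharP R p] :
    ℕ → ModuleCat R ⥤ ModuleCat R
  | 0 => Functor.id _
  | e + 1 => ModuleCat.extendScalars (frobenius R p) ⋙ Fpow R p e

open scoped Pointwise TensorProduct

universe u
namespace KunzAux

lemma cancel_one {n : ℕ} {d : WithBot ℕ∞} (h : (n : WithBot ℕ∞) + 1 ≤ d + 1) :
    (n : WithBot ℕ∞) ≤ d := by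
  induction d using WithBot.recBotCoe with
  | bot => exact absurd h (by simp)
  | coe d =>
    have h' : ((n : ℕ∞) + 1 : ℕ∞) ≤ d + 1 := by exact_mod_cast h
    have : (n : ℕ∞) ≤ d := (ENat.add_le_add_iff_right (by simp)).mp h'
    exact_mod_cast this

lemma exists_param (A : Type*) [CommRing A] [IsRegularLocalRing A]
    (h : ringKrullDim A ≠ 0) :
    ∃ x ∈ maximalIdeal A, x ∉ (maximalIdeal A) ^ 2 ∧ ∀ q ∈ minimalPrimes A, x ∉ q := by
  classical
  by_contra! hc
  have hfin : (minimalPrimes A).Finite := minimalPrimes.finite_of_isNoetherianRing A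
  let s : Finset (Ideal A) := insert ((maximalIdeal A) ^ 2) hfin.toFinset
  have hsub : (maximalIdeal A : Set A) ⊆ ⋃ i ∈ (↑s : Set (Ideal A)), (id i : Ideal A) := by
    intro x hx
    by_cases h2 : x ∈ (maximalIdeal A) ^ 2
    · exact Set.mem_biUnion (x := (maximalIdeal A) ^ 2) (by simp [s]) h2
    · obtain ⟨q, hq, hxq⟩ := hc x hx h2
      exact Set.mem_biUnion (x := q) (by simp [s, hq]) hxq
  rw [Ideal.subset_union_prime ((maximalIdeal A) ^ 2) ((maximalIdeal A) ^ 2)] at hsub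
  · obtain ⟨i, hi, hle⟩ := hsub
    simp only [s, Finset.mem_insert, Set.Finite.mem_toFinset] at hi
    apply h
    rcases hi with rfl | hi
    · have hm : maximalIdeal A = ⊥ := by
        apply Submodule.eq_bot_of_le_smul_of_le_jacobson_bot (maximalIdeal A) _
          (IsNoetherian.noetherian _)
        · simpa [pow_two] using hle
        · rw [IsLocalRing.jacobson_eq_maximalIdeal _ bot_ne_top]
      exact ringKrullDim_eq_zero_of_isField (IsLocalRing.isField_iff_maximalIdeal_eq.mpr hm)
    · have hp : i.IsPrime := hi.1.1
      have : maximalIdeal A = i := le_antisymm hle (le_maximalIdeal hp.ne_top)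
      rw [← maximalIdeal_height_eq_ringKrullDim, this]
      rw [Ideal.height_eq_zero_iff.mpr hi]
      rfl
  · intro i hi h1 _
    simp only [s, Finset.mem_insert, Set.Finite.mem_toFinset] at hi
    rcases hi with rfl | hi
    · exact absurd rfl h1
    · exact hi.1.1

lemma quot_regular {A : Type*} [CommRing A] [IsRegularLocalRing A] {x : A}
    (hx : x ∈ maximalIdeal A) (hx2 : x ∉ (maximalIdeal A) ^ 2) :
    IsRegularLocalRing (A ⧸ Ideal.span {x}) := by
  classical
  have hne : Ideal.span {x} ≠ ⊤ := by
    intro h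
    exact (maximalIdeal.isMaximal A).ne_top (top_le_iff.mp (h ▸ (by simpa using hx)))
  have : Nontrivial (A ⧸ Ideal.span {x}) := Ideal.Quotient.nontrivial_iff.mpr hne
  have : IsLocalRing (A ⧸ Ideal.span {x}) :=
    IsLocalRing.of_surjective' (Ideal.Quotient.mk _) Ideal.Quotient.mk_surjective
  apply IsRegularLocalRing.of_spanFinrank_maximalIdeal_le
  have hfg : (maximalIdeal A).FG := IsNoetherian.noetherian _
  obtain ⟨s, hcard, hs⟩ := Submodule.FG.exists_span_finset_card_eq_spanFinrank hfg
  have hxs : x ∈ Submodule.span A (s : Set A) := hs ▸ hx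
  obtain ⟨a, -, ha⟩ := Submodule.mem_span_finset.mp hxs
  have : ∃ g ∈ s, a g ∉ maximalIdeal A := by
    by_contra! hc
    apply hx2
    rw [← ha, pow_two]
    refine Ideal.sum_mem _ fun g hg => Ideal.mul_mem_mul (hc g hg) ?_
    rw [← hs]; exact Submodule.subset_span hg
  obtain ⟨g, hg, hu⟩ := this
  have hu : IsUnit (a g) := by simpa using hu
  let π := Ideal.Quotient.mk (Ideal.span {x})
  have hπx : π x = 0 := Ideal.Quotient.eq_zero_iff_mem.mpr (Ideal.mem_span_singleton_self x)
  have hmax : maximalIdeal (A ⧸ Ideal.span {x}) = (maximalIdeal A).map π := by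
    apply le_antisymm
    · intro y hy
      obtain ⟨y, rfl⟩ := Ideal.Quotient.mk_surjective y
      apply Ideal.mem_map_of_mem
      rw [mem_maximalIdeal, mem_nonunits_iff] at hy ⊢
      exact fun h => hy (h.map π)
    · rw [Ideal.map_le_iff_le_comap]
      intro y hy
      rw [Ideal.mem_comap, mem_maximalIdeal, mem_nonunits_iff]
      intro hyu
      obtain ⟨z, hz⟩ := hyu.exists_right_inv
      obtain ⟨z, rfl⟩ := Ideal.Quotient.mk_surjective z
      have hz' : y * z - 1 ∈ Ideal.span {x} := by
        rw [← Ideal.Quotient.eq_zero_iff_mem]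
        change π (y * z - 1) = 0
        rw [map_sub, map_mul, map_one]
        exact sub_eq_zero.mpr hz
      have hz2 : y * z - 1 ∈ maximalIdeal A :=
        (Ideal.span_singleton_le_iff_mem _).mpr hx hz'
      have h1 : (1 : A) ∈ maximalIdeal A := by
        have := sub_mem (Ideal.mul_mem_right z _ hy) hz2
        simpa using this
      exact (maximalIdeal.isMaximal A).ne_top ((Ideal.eq_top_iff_one _).mpr h1)
  have hspan : maximalIdeal (A ⧸ Ideal.span {x}) = Ideal.span (π '' (s.erase g : Set A)) := by
    rw [hmax, ← hs]
    change Ideal.map π (Ideal.span (s : Set A)) = _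
    rw [Ideal.map_span]
    apply le_antisymm
    · rw [Ideal.span_le]
      rintro _ ⟨t, ht, rfl⟩
      by_cases htg : t = g
      · subst htg
        have h0 : π (a t) * π t = - ∑ i ∈ s.erase t, π (a i) * π i := by
          rw [eq_neg_iff_add_eq_zero, Finset.add_sum_erase _ (fun i => π (a i) * π i) hg]
          have := congrArg π ha
          rw [hπx] at this
          simpa using this
        have : π t = ((hu.map π).unit⁻¹ : (A ⧸ Ideal.span {x})ˣ) * (π (a t) * π t) := by
          rw [← mul_assoc, IsUnit.val_inv_mul, one_mul]
        change π t ∈ _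
        rw [this, h0]
        apply Ideal.mul_mem_left
        apply neg_mem
        exact Ideal.sum_mem _ fun i hi => Ideal.mul_mem_left _ _
          (Ideal.subset_span ⟨i, hi, rfl⟩)
      · exact Ideal.subset_span ⟨t, by simp [htg]; simpa using ht, rfl⟩
    · exact Ideal.span_mono (Set.image_mono (by simp))
  have h1 : (maximalIdeal (A ⧸ Ideal.span {x})).spanFinrank + 1 ≤ (maximalIdeal A).spanFinrank := by
    rw [← hcard, ← Finset.card_erase_add_one hg, hspan]
    gcongr
    refine (Submodule.spanFinrank_span_le_ncard_of_finite ((Finset.finite_toSet _).image _)).trans ?_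
    refine (Set.ncard_image_le (Finset.finite_toSet _)).trans ?_
    rw [Set.ncard_coe_finset]
  have h2 : ringKrullDim A ≤ ringKrullDim (A ⧸ Ideal.span {x}) + 1 := by
    have := ringKrullDim_le_ringKrullDim_quotSMulTop_succ hx
    have h : Ideal.span {x} = x • (⊤ : Ideal A) := by simp [← Submodule.ideal_span_singleton_smul]
    rwa [← h] at this
  rw [← (isRegularLocalRing_iff A).mp inferInstance] at h2
  have h3 : (((maximalIdeal (A ⧸ Ideal.span {x})).spanFinrank + 1 : ℕ) : WithBot ℕ∞) ≤
    ringKrullDim (A ⧸ Ideal.span {x}) + 1 := (Nat.cast_le.mpr h1).trans h2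
  push_cast at h3
  exact cancel_one h3

lemma flat_of_ideal_containing {A B : Type*} [CommRing A] [IsNoetherianRing A] [CommRing B]
    [IsNoetherianRing B] [Algebra A B] (x : A)
    (hx : algebraMap A B x ∈ (⊥ : Ideal B).jacobson)
    (h : ∀ J : Ideal A, x ∈ J → Function.Injective (J.subtype.lTensor B)) :
    Module.Flat A B := by
  rw [Module.Flat.iff_lTensor_injective']
  intro J
  induction J using IsNoetherian.induction with
  | hgt J ih =>
  let C : Ideal A := Submodule.comap (LinearMap.lsmul A A x) J
  have hJC : J ≤ C := fun a ha => Ideal.mul_mem_left J x ha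
  let μ : C →ₗ[A] J := (LinearMap.lsmul A A x).restrict (p := C) (q := J) (fun a ha => ha)
  let D : Ideal A := J ⊔ Ideal.span {x}
  have hxD : x ∈ D := Ideal.mem_sup_right (Ideal.mem_span_singleton_self x)
  have hJD : J ≤ D := le_sup_left
  let α : C →ₗ[A] J × A := μ.prod C.subtype
  let ν : A →ₗ[A] D := LinearMap.toSpanSingleton A D ⟨x, hxD⟩
  let γ : J × A →ₗ[A] D := (Submodule.inclusion hJD).coprod (-ν)
  have hγ (j : J) (a : A) : ((γ (j, a) : D) : A) = j - a * x := by
    simp [γ, ν, sub_eq_add_neg]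
  have hex : Function.Exact α γ := by
    rintro ⟨j, a⟩
    rw [← Subtype.coe_inj, hγ]
    constructor
    · intro h0
      have h0' : (j : A) = a * x := sub_eq_zero.mp h0
      refine ⟨⟨a, ?_⟩, ?_⟩
      · change x * a ∈ J
        rw [mul_comm, ← h0']; exact j.2
      · refine Prod.ext (Subtype.ext ?_) rfl
        change x * a = j
        rw [h0', mul_comm]
    · rintro ⟨c, hc⟩
      have h1 : x * c.1 = j := congrArg (fun t : J × A => (t.1 : A)) hc
      have h2 : c.1 = a := congrArg (fun t : J × A => t.2) hc
      rw [← h1, h2]; change x * a - a * x = 0; ring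
  have hsur : Function.Surjective γ := by
    rintro ⟨d, hd⟩
    obtain ⟨j, hj, y, hy, rfl⟩ := Submodule.mem_sup.mp hd
    obtain ⟨a, rfl⟩ := Ideal.mem_span_singleton'.mp hy
    refine ⟨(⟨j, hj⟩, -a), Subtype.ext ?_⟩
    rw [hγ]; ring
  have hexT := lTensor_exact B hex hsur
  have key : ∀ z : B ⊗[A] J, J.subtype.lTensor B z = 0 →
      ∃ w : B ⊗[A] C, μ.lTensor B w = z ∧ C.subtype.lTensor B w = 0 := by
    intro z hz
    have h1 : γ.lTensor B ((LinearMap.inl A J A).lTensor B z) = 0 := by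
      apply h D hxD
      rw [map_zero, ← LinearMap.lTensor_comp_apply, ← LinearMap.lTensor_comp_apply, ← hz]
      congr 2
      ext j
      simp [γ]
    obtain ⟨w, hw⟩ := (hexT _).mp h1
    refine ⟨w, ?_, ?_⟩
    · have := congrArg ((LinearMap.fst A J A).lTensor B) hw
      rw [← LinearMap.lTensor_comp_apply, ← LinearMap.lTensor_comp_apply] at this
      simpa [α, LinearMap.fst_prod, LinearMap.fst_comp_inl] using this
    · have := congrArg ((LinearMap.snd A J A).lTensor B) hw
      rw [← LinearMap.lTensor_comp_apply, ← LinearMap.lTensor_comp_apply] at this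
      simpa [α, LinearMap.snd_prod, LinearMap.snd_comp_inl] using this
  by_cases hCJ : C ≤ J
  · let κ : C →ₗ[A] J := Submodule.inclusion hCJ
    have hμ : μ = x • κ := by
      ext c; rfl
    let T := TensorProduct.AlgebraTensorModule.lTensor B B J.subtype
    have hT : ∀ z, T z = J.subtype.lTensor B z := fun z => rfl
    let K := LinearMap.ker T
    have hK : K = ⊥ := by
      apply Submodule.eq_bot_of_le_smul_of_le_jacobson_bot (Ideal.span {algebraMap A B x}) K
        (IsNoetherian.noetherian _)
      · intro z hz
        obtain ⟨w, hw1, hw2⟩ := key z hz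
        rw [hμ, LinearMap.lTensor_smul, LinearMap.smul_apply] at hw1
        rw [← hw1, ← algebraMap_smul B x]
        apply Submodule.smul_mem_smul (Ideal.mem_span_singleton_self _)
        change J.subtype.lTensor B (κ.lTensor B w) = 0
        rw [← LinearMap.lTensor_comp_apply, ← hw2]
        rfl
      · simpa [Ideal.span_le] using hx
    rw [injective_iff_map_eq_zero]
    intro z hz
    have : z ∈ K := hz
    rw [hK] at this
    simpa using this
  · have hlt : J < C := lt_of_le_not_ge hJC hCJ
    rw [injective_iff_map_eq_zero]
    intro z hz
    obtain ⟨w, hw1, hw2⟩ := key z hz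
    have : w = 0 := ih C hlt (by rw [hw2, map_zero])
    rw [← hw1, this, map_zero]

/-- Every Frobenius-relation is trivial: equational form of flatness of Frobenius. -/
def FrobRel (p : ℕ) (A : Type*) [CommRing A] : Prop :=
  ∀ (n : ℕ) (f b : Fin n → A), ∑ i, f i ^ p * b i = 0 →
    ∃ (k : ℕ) (a : Fin n → Fin k → A) (c : Fin k → A),
      (∀ i, b i = ∑ j, a i j ^ p * c j) ∧ ∀ j, ∑ i, f i * a i j = 0

lemma frobRel_of_flat {p : ℕ} [Fact p.Prime] {A : Type*} [CommRing A] [CharP A p]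
    (h : (frobenius A p).Flat) : FrobRel p A := by
  intro n f b hfb
  exact (@Module.Flat.iff_forall_isTrivialRelation A A _ _
    (frobenius A p).toAlgebra.toModule).mp h hfb

lemma flat_step {p : ℕ} [Fact p.Prime] {A B : Type*} [CommRing A] [IsDomain A] [IsLocalRing A]
    [IsNoetherianRing A] [CharP A p] [CommRing B] [Algebra A B] (e : A ≃+* B)
    (he : ∀ a, algebraMap A B a = e (a ^ p)) {x : A} (hx0 : x ≠ 0) (hx : x ∈ maximalIdeal A)
    (hq : FrobRel p (A ⧸ Ideal.span {x})) : Module.Flat A B := by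
  have hp : p.Prime := Fact.out
  have : IsNoetherianRing B := isNoetherianRing_of_ringEquiv A e
  have : IsLocalRing B := e.isLocalRing
  have hsm (J : Ideal A) (a b : A) (m : J) : e (a ^ p * b) ⊗ₜ[A] m = e b ⊗ₜ[A] (a • m) := by
    rw [← TensorProduct.smul_tmul, Algebra.smul_def, he, map_mul]
  apply flat_of_ideal_containing x
  · rw [IsLocalRing.jacobson_eq_maximalIdeal _ bot_ne_top, he, mem_maximalIdeal, mem_nonunits_iff]
    rw [MulEquiv.isUnit_map, isUnit_pow_iff hp.ne_zero]
    exact hx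
  intro J hxJ
  have claim : ∀ i ≤ p, ∀ (n : ℕ) (f : Fin n → J) (b : Fin n → A),
      (∃ t, ∑ l, (f l : A) ^ p * b l = x ^ i * t) →
      ∃ t', ∑ l, e (x ^ (p - i) * b l) ⊗ₜ[A] f l = e t' ⊗ₜ[A] (⟨x, hxJ⟩ : J) := by
    intro i
    induction i with
    | zero =>
      intro _ n f b _
      refine ⟨∑ l, (f l : A) ^ p * b l, ?_⟩
      rw [map_sum, TensorProduct.sum_tmul]
      refine Finset.sum_congr rfl fun l _ => ?_
      rw [Nat.sub_zero, hsm, hsm]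
      congr 1
      exact Subtype.ext (mul_comm _ _)
    | succ i ih =>
      rintro hi n f b ⟨t, ht⟩
      let π := Ideal.Quotient.mk (Ideal.span {x})
      have hπx : π x = 0 := Ideal.Quotient.eq_zero_iff_mem.mpr (Ideal.mem_span_singleton_self x)
      have h0 : ∑ l, π (f l) ^ p * π (b l) = 0 := by
        have := congrArg π ht
        simpa [pow_succ, hπx] using this
      obtain ⟨k, a, c, hb, hf⟩ := hq n _ _ h0
      have hsurj : Function.Surjective π := Ideal.Quotient.mk_surjective
      choose a' ha' using fun l j => hsurj (a l j)
      choose c' hc' using fun j => hsurj (c j)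
      have hb' : ∀ l, ∃ b', b l = ∑ j, a' l j ^ p * c' j + x * b' := by
        intro l
        have : b l - ∑ j, a' l j ^ p * c' j ∈ Ideal.span {x} := by
          rw [← Ideal.Quotient.eq_zero_iff_mem]
          change π _ = 0
          simp [ha', hc', hb l]
        obtain ⟨b', hb'⟩ := Ideal.mem_span_singleton.mp this
        exact ⟨b', by rw [← hb']; ring⟩
      choose b' hb' using hb'
      have hE : ∀ j, ∃ E, ∑ l, (f l : A) * a' l j = x * E := by
        intro j
        have : ∑ l, (f l : A) * a' l j ∈ Ideal.span {x} := by
          rw [← Ideal.Quotient.eq_zero_iff_mem]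
          change π _ = 0
          simp [ha', hf j]
        exact Ideal.mem_span_singleton.mp this
      choose E hE using hE
      have hEp : ∀ j, ∑ l, (f l : A) ^ p * a' l j ^ p = x ^ p * E j ^ p := by
        intro j
        rw [← mul_pow, ← hE j, sum_pow_char]
        simp [mul_pow]
      have hsum : ∑ l, (f l : A) ^ p * b' l = x ^ i * (t - x ^ (p - (i + 1)) * ∑ j, E j ^ p * c' j) := by
        apply mul_left_cancel₀ hx0
        have e1 : ∑ l, (f l : A) ^ p * b l =
            ∑ j, x ^ p * E j ^ p * c' j + x * ∑ l, (f l : A) ^ p * b' l := by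
          simp_rw [← hEp, Finset.sum_mul]
          rw [Finset.sum_comm, Finset.mul_sum, ← Finset.sum_add_distrib]
          refine Finset.sum_congr rfl fun l _ => ?_
          rw [hb' l, mul_add, Finset.mul_sum]
          congr 1
          · exact Finset.sum_congr rfl fun j _ => by ring
          · ring
        have e2 : x ^ p = x ^ (i + 1) * x ^ (p - (i + 1)) := by
          rw [← pow_add]; congr 1; omega
        have e3 : ∑ j, x ^ p * E j ^ p * c' j = x ^ p * ∑ j, E j ^ p * c' j := by
          rw [Finset.mul_sum]; exact Finset.sum_congr rfl fun j _ => by ring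
        rw [ht, e3, e2] at e1
        linear_combination -e1
      obtain ⟨t', ht'⟩ := ih (by omega) n f b' ⟨_, hsum⟩
      refine ⟨∑ j, E j ^ p * (x ^ (p - (i + 1)) * c' j) + t', ?_⟩
      have e4 : ∀ l, e (x ^ (p - (i + 1)) * b l) ⊗ₜ[A] f l =
          ∑ j, e (x ^ (p - (i + 1)) * c' j) ⊗ₜ[A] (a' l j • f l) +
            e (x ^ (p - i) * b' l) ⊗ₜ[A] f l := by
        intro l
        have e5 : x ^ (p - (i + 1)) * b l =
            ∑ j, a' l j ^ p * (x ^ (p - (i + 1)) * c' j) + x ^ (p - i) * b' l := by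
          have : p - i = p - (i + 1) + 1 := by omega
          rw [hb' l, this, mul_add, Finset.mul_sum]
          congr 1
          · exact Finset.sum_congr rfl fun j _ => by ring
          · ring
        rw [e5, map_add, TensorProduct.add_tmul, map_sum, TensorProduct.sum_tmul]
        simp_rw [hsm]
      simp_rw [e4]
      rw [Finset.sum_add_distrib, ht', map_add, TensorProduct.add_tmul, Finset.sum_comm, map_sum,
        TensorProduct.sum_tmul]
      congr 1
      refine Finset.sum_congr rfl fun j _ => ?_
      rw [hsm, ← TensorProduct.tmul_sum]
      congr 1
      apply Subtype.ext
      have := hE j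
      simp only [AddSubmonoidClass.coe_finsetSum, SetLike.val_smul, smul_eq_mul]
      rw [mul_comm (E j), ← this]
      exact Finset.sum_congr rfl fun l _ => mul_comm _ _
  rw [injective_iff_map_eq_zero]
  intro z hz
  obtain ⟨n, f, b, rfl⟩ : ∃ (n : ℕ) (f : Fin n → J) (b : Fin n → A),
      z = ∑ l, e (b l) ⊗ₜ[A] f l := by
    clear hz
    induction z with
    | zero => exact ⟨0, Fin.elim0, Fin.elim0, by simp⟩
    | tmul y m => exact ⟨1, fun _ => m, fun _ => e.symm y, by simp⟩
    | add y z hy hz =>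
      obtain ⟨n, f, b, rfl⟩ := hy
      obtain ⟨n', f', b', rfl⟩ := hz
      refine ⟨n + n', Fin.append f f', Fin.append b b', ?_⟩
      simp [Fin.sum_univ_add]
  have hr : ∀ (y : A) (m : J), TensorProduct.rid A B (J.subtype.lTensor B (e y ⊗ₜ m)) =
      e ((m : A) ^ p * y) := by
    intro y m
    simp [Algebra.smul_def, he]
  have h1 : ∑ l, (f l : A) ^ p * b l = x ^ p * 0 := by
    have := congrArg (TensorProduct.rid A B) hz
    rw [map_sum, map_sum, map_zero] at this
    simp_rw [hr] at this
    rw [← map_sum] at this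
    rw [mul_zero]
    exact e.injective (by rw [this, map_zero])
  obtain ⟨t', ht'⟩ := claim p le_rfl n f b ⟨0, h1⟩
  simp only [Nat.sub_self, pow_zero, one_mul] at ht'
  rw [ht'] at hz ⊢
  have := congrArg (TensorProduct.rid A B) hz
  rw [hr, map_zero] at this
  have h2 : x ^ p * t' = 0 := e.injective (by rw [this, map_zero])
  have h3 : t' = 0 := (mul_eq_zero.mp h2).resolve_left (pow_ne_zero _ hx0)
  rw [h3, map_zero, TensorProduct.zero_tmul]

lemma frob_local (p : ℕ) [Fact p.Prime] (d : ℕ) : ∀ (A : Type u) [CommRing A]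
    [IsRegularLocalRing A] [CharP A p], ringKrullDim A = d →
    IsDomain A ∧ (frobenius A p).Flat := by
  have hp : p.Prime := Fact.out
  induction d with
  | zero =>
    intro A _ _ _ hd
    have hF : IsField A := by
      rw [IsLocalRing.isField_iff_maximalIdeal_eq]
      have := (isRegularLocalRing_iff A).mp inferInstance
      rw [hd] at this
      rw [← Submodule.spanFinrank_eq_zero_iff_eq_bot (IsNoetherian.noetherian _)]
      exact_mod_cast this
    exact ⟨hF.isDomain, RingHom.Flat.of_isField hF _⟩
  | succ d ih =>
    intro A _ _ _ hd
    obtain ⟨x, hx, hx2, hxq⟩ := exists_param A (by rw [hd]; exact_mod_cast Nat.succ_ne_zero d)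
    have hreg := quot_regular hx hx2
    have hchar : CharP (A ⧸ Ideal.span {x}) p := by
      have h0 : ((p : ℕ) : A ⧸ Ideal.span {x}) = 0 := by
        rw [← map_natCast (Ideal.Quotient.mk (Ideal.span {x})), CharP.cast_eq_zero, map_zero]
      exact (CharP.charP_iff_prime_eq_zero hp).mpr h0
    have hdim : ringKrullDim (A ⧸ Ideal.span {x}) = d := by
      have h1 : ringKrullDim (A ⧸ Ideal.span {x}) + 1 = ringKrullDim A := by
        have h : Ideal.span {x} = x • (⊤ : Ideal A) := by
          simp [← Submodule.ideal_span_singleton_smul]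
        rw [ringKrullDim_eq_of_ringEquiv (Ideal.quotientEquivAlgOfEq A h).toRingEquiv,
          ← Module.supportDim_quotient_eq_ringKrullDim, ← Module.supportDim_self_eq_ringKrullDim]
        have hann : Module.annihilator A A = ⊥ :=
          Module.annihilator_eq_bot.mpr inferInstance
        refine Module.supportDim_quotSMulTop_succ_eq_of_notMem_minimalPrimes_of_mem_jacobson
          (R := A) (M := A) (x := x) ?_ ?_
        · rw [hann]; exact hxq
        · rw [hann, IsLocalRing.jacobson_eq_maximalIdeal _ bot_ne_top]
          exact hx
      have h2 := (isRegularLocalRing_iff (A ⧸ Ideal.span {x})).mp inferInstance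
      rw [← h2, hd] at h1
      rw [← h2]
      have h3 : (Submodule.spanFinrank (maximalIdeal (A ⧸ Ideal.span {x}))) + 1 = d + 1 := by
        exact_mod_cast h1
      have h4 := Nat.succ_injective h3
      exact_mod_cast h4
    obtain ⟨hdom, hflat⟩ := ih (A ⧸ Ideal.span {x}) hdim
    have hprime : (Ideal.span {x}).IsPrime := (Ideal.Quotient.isDomain_iff_prime _).mp hdom
    have hA : IsDomain A := by
      obtain ⟨q, hq, hqx⟩ := Ideal.exists_minimalPrimes_le (I := ⊥) (J := Ideal.span {x}) bot_le
      have hqp : q.IsPrime := hq.1.1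
      have hq0 : q = ⊥ := by
        apply Submodule.eq_bot_of_le_smul_of_le_jacobson_bot (Ideal.span {x}) q
          (IsNoetherian.noetherian _)
        · intro y hy
          obtain ⟨z, rfl⟩ := Ideal.mem_span_singleton.mp (hqx hy)
          exact Ideal.mul_mem_mul (Ideal.mem_span_singleton_self x)
            ((hqp.mem_or_mem hy).resolve_left (hxq q hq))
        · rw [IsLocalRing.jacobson_eq_maximalIdeal _ bot_ne_top]
          simpa using hx
      subst hq0
      exact IsDomain.of_bot_isPrime A
    refine ⟨hA, ?_⟩
    have hx0 : x ≠ 0 := by rintro rfl; exact hx2 (zero_mem _)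
    exact @flat_step p _ A A _ _ _ _ _ _ (frobenius A p).toAlgebra (RingEquiv.refl A)
      (fun a => rfl) x hx0 hx (frobRel_of_flat hflat)
end KunzAux

namespace KunzAux

lemma flat_of_maximal {R S : Type*} [CommRing R] [CommRing S] (φ : R →+* S)
    (h : ∀ (P : Ideal S) [P.IsMaximal],
      ((algebraMap S (Localization.AtPrime P)).comp φ).Flat) : φ.Flat := by
  algebraize_only [φ]
  rw [RingHom.Flat]
  apply Module.flat_of_isLocalized_maximal S S (fun P ↦ Localization.AtPrime P)
    (fun P ↦ Algebra.linearMap S _)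
  intro P _
  have := h P
  rw [RingHom.Flat] at this
  convert this using 1
  apply Module.ext'
  intro r x
  rw [Algebra.smul_def, IsScalarTower.algebraMap_apply R S]
  rfl

lemma frob_global (p : ℕ) [Fact p.Prime] {R : Type u} [CommRing R] [CharP R p]
    (hreg : IsRegularRingStmt R) : (frobenius R p).Flat := by
  have hn := hreg.1
  apply flat_of_maximal
  intro P _
  have hN : IsNoetherianRing (Localization.AtPrime P) :=
    IsLocalization.isNoetherianRing P.primeCompl _ hn
  have h1 : IsRegularLocalRing (Localization.AtPrime P) :=
    (IsRegularLocalRing.iff_finrank_cotangentSpace _).mpr (hreg.2 P).symm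
  have hch : CharP (Localization.AtPrime P) p := by
    refine (CharP.charP_iff_prime_eq_zero Fact.out).mpr ?_
    rw [← map_natCast (algebraMap R (Localization.AtPrime P)), CharP.cast_eq_zero, map_zero]
  have h2 := (frob_local p _ (Localization.AtPrime P)
    ((isRegularLocalRing_iff _).mp h1).symm).2
  have h3 : (algebraMap R (Localization.AtPrime P)).comp (frobenius R p) =
      (frobenius (Localization.AtPrime P) p).comp (algebraMap R (Localization.AtPrime P)) := by
    ext x
    simp [frobenius_def]
  rw [h3]
  refine RingHom.Flat.comp ?_ h2
  rw [RingHom.flat_algebraMap_iff]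
  exact IsLocalization.flat _ P.primeCompl

/-- The elements killed by a power of every `f j`. -/
def tors {R : Type*} [CommRing R] {c : ℕ} (f : Fin c → R) (N : Type*) [AddCommGroup N]
    [Module R N] : Submodule R N where
  carrier := {m | ∃ n : ℕ, ∀ j, f j ^ n • m = 0}
  zero_mem' := ⟨0, by simp⟩
  add_mem' := by
    rintro a b ⟨n, hn⟩ ⟨k, hk⟩
    refine ⟨n + k, fun j => ?_⟩
    rw [smul_add, pow_add, mul_comm, mul_smul, hn, mul_comm, mul_smul, hk]
    simp
  smul_mem' := by
    rintro r a ⟨n, hn⟩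
    exact ⟨n, fun j => by rw [smul_comm, hn, smul_zero]⟩

lemma one_step_aux {A B M : Type*} [CommRing A] [CommRing B] [Algebra A B] [Module.Flat A B]
    [AddCommGroup M] [Module A M] {c : ℕ} (g : Fin c → A) (s : A)
    (hs : ∀ m : M, (∀ j, g j • m = 0) → s • m = 0) (z : B ⊗[A] M)
    (hz : ∀ j, algebraMap A B (g j) • z = 0) : algebraMap A B s • z = 0 := by
  let θ : M →ₗ[A] (Fin c → M) := LinearMap.pi fun j => LinearMap.lsmul A M (g j)
  have hex : Function.Exact (LinearMap.ker θ).subtype θ :=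
    LinearMap.exact_subtype_ker_map θ
  have hex2 := Module.Flat.lTensor_exact B hex
  have hθ : θ = ∑ j, (LinearMap.single A (fun _ => M) j) ∘ₗ (LinearMap.lsmul A M (g j)) := by
    ext m j
    simp [θ, LinearMap.sum_apply, Finset.sum_apply, Pi.single_apply]
  have hzz : θ.lTensor B z = 0 := by
    rw [hθ, ← LinearMap.coe_lTensorHom, map_sum, LinearMap.sum_apply]
    refine Finset.sum_eq_zero fun j _ => ?_
    rw [LinearMap.coe_lTensorHom, LinearMap.lTensor_comp, LinearMap.comp_apply]
    have : (LinearMap.lsmul A M (g j)).lTensor B z = g j • z := by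
      have : LinearMap.lsmul A M (g j) = g j • LinearMap.id := by ext; simp
      rw [this, LinearMap.lTensor_smul]; simp
    rw [this, ← algebraMap_smul B, hz, map_zero]
  obtain ⟨y, rfl⟩ := (hex2 z).mp hzz
  rw [algebraMap_smul, ← map_smul]
  clear hz hzz
  have : s • y = 0 := by
    induction y with
    | zero => simp
    | tmul b m =>
      rw [← TensorProduct.tmul_smul]
      have : s • m = 0 := by
        apply Subtype.ext
        refine hs m.1 fun j => ?_
        have := congrFun (LinearMap.mem_ker.mp m.2) j
        simpa [θ] using this
      rw [this, TensorProduct.tmul_zero]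
    | add a b ha hb =>
      rw [smul_add, ha, hb, add_zero]
  rw [this, map_zero]



lemma ext_step {R S : Type} [CommRing R] [CommRing S] (φ : R →+* S) (hφ : φ.Flat)
    (M : ModuleCat.{u} R) {c : ℕ} (g : Fin c → R) (s : R)
    (hs : ∀ m : M, (∀ j, g j • m = 0) → s • m = 0) (z : (ModuleCat.extendScalars φ).obj M)
    (hz : ∀ j, φ (g j) • z = 0) : φ s • z = 0 := by
  let := φ.toAlgebra
  have : Module.Flat R S := hφ
  exact one_step_aux (A := R) (B := S) (M := M) g s hs z hz

lemma ext_inj {R S : Type} [CommRing R] [CommRing S] (φ : R →+* S) (hφ : φ.Flat)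
    {M N : ModuleCat.{u} R} (β : M ⟶ N) (hβ : Function.Injective β) :
    Function.Injective ((ModuleCat.extendScalars φ).map β) := by
  let := φ.toAlgebra
  have : Module.Flat R S := hφ
  exact Module.Flat.lTensor_preserves_injective_linearMap (M := S) β.hom hβ

variable {R : Type} [CommRing R] (p : ℕ) [Fact p.Prime] [CharP R p]

lemma fpow_inj (hφ : (frobenius R p).Flat) (e : ℕ) {M N : ModuleCat R} (β : M ⟶ N)
    (hβ : Function.Injective β) : Function.Injective ((Fpow R p e).map β) := by
  induction e generalizing M N with
  | zero => exact hβ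
  | succ e ih => exact ih _ (ext_inj _ hφ β hβ)

lemma fpow_tors (hφ : (frobenius R p).Flat) (e : ℕ) (M : ModuleCat R) {c : ℕ} (f : Fin c → R)
    (s : R) (hs : ∀ m ∈ tors f M, s • m = 0) :
    ∀ z ∈ tors f ((Fpow R p e).obj M), s ^ p ^ e • z = 0 := by
  induction e generalizing M s with
  | zero =>
    intro z hz
    rw [pow_zero, pow_one]
    exact hs z hz
  | succ e ih =>
    intro z hz
    rw [pow_succ', pow_mul]
    refine ih ((ModuleCat.extendScalars (frobenius R p)).obj M) (s ^ p) ?_ z hz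
    rintro w ⟨n, hn⟩
    refine ext_step (frobenius R p) hφ M (fun j => f j ^ n) s (fun m hm => hs m ⟨n, hm⟩) w ?_
    intro j
    have hp : (f j ^ n) ^ p = (f j ^ n) ^ (p - 1) * f j ^ n :=
      (pow_sub_one_mul (Nat.Prime.ne_zero Fact.out) _).symm
    rw [frobenius_def, hp, mul_smul, hn, smul_zero]

lemma seq_inj {X : ℕ → ModuleCat R} (g : ∀ n, X n ⟶ X (n + 1))
    (hg : ∀ n, Function.Injective (g n)) {i j : ℕ} (h : i ⟶ j) :
    Function.Injective ((Functor.ofSequence g).map h) := by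
  obtain ⟨k, rfl⟩ := Nat.exists_eq_add_of_le (leOfHom h)
  induction k with
  | zero =>
    have : h = 𝟙 _ := Subsingleton.elim _ _
    rw [this, CategoryTheory.Functor.map_id]
    exact fun _ _ h => h
  | succ k ih =>
    have : h = homOfLE (Nat.le_add_right i k) ≫ homOfLE (Nat.le_succ (i + k)) :=
      Subsingleton.elim _ _
    rw [this, Functor.map_comp, Functor.ofSequence_map_homOfLE_succ]
    intro a b hab
    exact ih _ (hg _ hab)

lemma colim_inj {X : ℕ → ModuleCat R} (g : ∀ n, X n ⟶ X (n + 1))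
    (hg : ∀ n, Function.Injective (g n)) (i : ℕ) :
    Function.Injective (Limits.colimit.ι (Functor.ofSequence g) i) := by
  intro a b hab
  obtain ⟨k, u, v, h⟩ := (Limits.Concrete.colimit_rep_eq_iff_exists _ a b).mp hab
  have : u = v := Subsingleton.elim _ _
  subst this
  exact seq_inj g hg u h

lemma tors_local {N : Type*} [AddCommGroup N] [Module R N] {c : ℕ} (f : Fin c → R)
    (P : Ideal R) [P.IsPrime]
    (h : ∀ m : N, (∀ j, f j • m = 0) → ∃ r ∉ P, r • m = 0) :
    ∀ m ∈ tors f N, ∃ r ∉ P, r • m = 0 := by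
  have key : ∀ (k : ℕ) (n : Fin c → ℕ) (m : N), ∑ j, n j = k → (∀ j, f j ^ n j • m = 0) →
      ∃ r ∉ P, r • m = 0 := by
    intro k
    induction k with
    | zero =>
      intro n m hn hm
      refine h m fun j => ?_
      have : n j = 0 := by
        have := Finset.sum_eq_zero_iff.mp hn j (Finset.mem_univ j)
        exact this
      have h2 := hm j
      rw [this, pow_zero, one_smul] at h2
      rw [h2, smul_zero]
    | succ k ih =>
      intro n m hn hm
      by_cases h0 : ∃ j, n j = 0
      · obtain ⟨j, hj⟩ := h0
        have h2 := hm j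
        rw [hj, pow_zero, one_smul] at h2
        exact ⟨1, P.one_notMem, by rw [h2, smul_zero]⟩
      push Not at h0
      have hr : ∀ j, ∃ r ∉ P, r • f j • m = 0 := by
        intro j
        refine ih (Function.update n j (n j - 1)) (f j • m) ?_ ?_
        · have h1 := Finset.sum_update_of_mem (Finset.mem_univ j) n (n j - 1)
          have h2 := Finset.add_sum_erase Finset.univ n (Finset.mem_univ j)
          rw [← Finset.erase_eq] at h1
          have := h0 j
          omega
        · intro i
          by_cases hij : i = j
          · subst hij
            rw [Function.update_self, ← mul_smul, ← pow_succ, Nat.sub_add_cancel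
              (Nat.one_le_iff_ne_zero.mpr (h0 i))]
            exact hm i
          · rw [Function.update_of_ne hij, smul_comm, hm, smul_zero]
      choose r hrP hr using hr
      obtain ⟨t, htP, ht⟩ := h ((∏ j, r j) • m) (fun j => by
        rw [← Finset.prod_erase_mul _ _ (Finset.mem_univ j), mul_smul, smul_comm (f j),
          smul_comm (f j), hr, smul_zero])
      refine ⟨t * ∏ j, r j, ?_, by rw [mul_smul, ht]⟩
      intro hmem
      rcases Ideal.IsPrime.mem_or_mem inferInstance hmem with h1 | h1
      · exact htP h1
      · obtain ⟨j, -, hj⟩ := (Ideal.IsPrime.prod_mem_iff (hp := inferInstance)).mp h1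
        exact hrP j hj
  rintro m ⟨n, hn⟩
  exact key _ (fun _ => n) m rfl hn

end KunzAux

/-- For an `F`-finite `F`-module `M_∞ = colim (M →β→ F(M) →F(β)→ F²(M) → ⋯)` over a
noetherian regular ring of prime characteristic `p` (with `M` finitely generated and `β`
injective) and elements `f1, …, fc ∈ R`, the support of
`H^0(K^•(f1,…,fc; M_∞)) = ∩ⱼ ker(fⱼ : M_∞ → M_∞)` is Zariski-closed. -/
theorem stmt_5 {R : Type} [CommRing R] (p : ℕ) [Fact p.Prime] [CharP R p]
    (hreg : IsRegularRingStmt R)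
    (M : ModuleCat R) [Module.Finite R M]
    (β : M ⟶ (ModuleCat.extendScalars (frobenius R p)).obj M)
    (hβ : Function.Injective β)
    (c : ℕ) (f : Fin c → R) :
    IsClosed (Module.support R
      ↥(⨅ j : Fin c, LinearMap.ker
        ((LinearMap.lsmul R
          ↥(Limits.colimit (Functor.ofSequence (fun e => (Fpow R p e).map β)))) (f j)))) := by
  have hn : IsNoetherianRing R := hreg.1
  have hφ := KunzAux.frob_global p hreg
  have hinj : ∀ e, Function.Injective ((Fpow R p e).map β) :=
    fun e => KunzAux.fpow_inj p hφ e β hβ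
  have hι := KunzAux.colim_inj (fun e => (Fpow R p e).map β) hinj
  have hfin : Module.Finite R (KunzAux.tors f M) := inferInstance
  suffices hE : Module.support R
      ↥(⨅ j : Fin c, LinearMap.ker
        ((LinearMap.lsmul R
          ↥(Limits.colimit (Functor.ofSequence (fun e => (Fpow R p e).map β)))) (f j))) =
      Module.support R (KunzAux.tors f M) by
    rw [hE, Module.support_eq_zeroLocus]
    exact PrimeSpectrum.isClosed_zeroLocus _
  apply le_antisymm
  · intro P hP
    by_contra hPL
    rw [Module.support_eq_zeroLocus, PrimeSpectrum.mem_zeroLocus, Set.not_subset] at hPL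
    obtain ⟨s, hs, hsP⟩ := hPL
    obtain ⟨⟨z, hz⟩, hz'⟩ := Module.mem_support_iff'.mp hP
    obtain ⟨e, w, rfl⟩ := Limits.Concrete.colimit_exists_rep _ z
    refine hz' (s ^ p ^ e) (fun h => hsP (P.isPrime.mem_of_pow_mem _ h)) ?_
    apply Subtype.ext
    change s ^ p ^ e • (Limits.colimit.ι
      (Functor.ofSequence (fun e => (Fpow R p e).map β)) e).hom w = 0
    rw [← map_smul]
    have hw : s ^ p ^ e • (show (Fpow R p e).obj M from w) = 0 := by
      refine KunzAux.fpow_tors p hφ e M f s ?_ w ⟨1, fun j => ?_⟩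
      · intro m hm
        have := Module.mem_annihilator.mp hs ⟨m, hm⟩
        exact congrArg Subtype.val this
      · rw [pow_one]
        apply hι e
        have := (Submodule.mem_iInf _).mp hz j
        refine Eq.trans ?_ (map_zero (Limits.colimit.ι
          (Functor.ofSequence (fun e => (Fpow R p e).map β)) e).hom).symm
        exact (map_smul (Limits.colimit.ι
          (Functor.ofSequence (fun e => (Fpow R p e).map β)) e).hom (f j) w).trans this
    exact (congrArg _ hw).trans (map_zero _)
  · intro P hP
    by_contra hPH
    obtain ⟨⟨l, hl⟩, hl'⟩ := Module.mem_support_iff'.mp hP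
    have hPH' := Module.notMem_support_iff'.mp hPH
    obtain ⟨r, hrP, hr⟩ := KunzAux.tors_local f P.asIdeal (N := M) (by
      intro m hm
      let ι0 : M →ₗ[R] ↥(Limits.colimit (Functor.ofSequence (fun e => (Fpow R p e).map β))) :=
        (Limits.colimit.ι (Functor.ofSequence (fun e => (Fpow R p e).map β)) 0).hom
      obtain ⟨r, hrP, hr⟩ := hPH' ⟨ι0 m, (Submodule.mem_iInf _).mpr fun j => by
        rw [LinearMap.mem_ker, LinearMap.lsmul_apply, ← map_smul, hm, map_zero]⟩
      refine ⟨r, hrP, ?_⟩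
      have hr2 : r • ι0 m = 0 := congrArg Subtype.val hr
      rw [← map_smul] at hr2
      exact hι 0 (hr2.trans (map_zero ι0).symm)) l hl
    exact hl' r hrP (Subtype.ext hr)
end

section
/- Let R be a noetherian regular ring of characteristic p, I = (g1,…,gt), and e ≥ 0. Let Ȟ^j_e denote the image of H^j(Č^•(g;R)_e) in H^j_I(R) under the map induced by inclusion of the e-th truncated Čech complex. Then Ȟ^j_e ≅ ker(δ^j_e)/(im(δ^{j-1}) ∩ ker(δ^j_e)), where δ^j_e is the j-th differential of the truncation and δ^{j-1} the (j-1)-st Čech differential, and F(Ȟ^j_e) ≅ Ȟ^j_{e+1}. In particular each Ȟ^j_e is a finitely generated R-module and H^j_I(R) = ∪_e Ȟ^j_e. -/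
open IsLocalRing

section Cech

variable {R : Type} [CommRing R] {t : ℕ}

/-- The product `g_{j1} ⋯ g_{ji}` indexed by a finite set `s` of indices. -/
abbrev cechProd (g : Fin t → R) (s : Finset (Fin t)) : R := ∏ j ∈ s, g j

/-- The degree `j` term of the Čech complex of `R` on `g1, …, gt`. -/
abbrev CechTerm (g : Fin t → R) (j : ℕ) : Type :=
  (s : {s : Finset (Fin t) // s.card = j}) → Localization.Away (cechProd g s.1)

/-- The canonical `R`-linear localization map `R_{g_s} → R_{g_{s'}}` for `s ⊆ s'`. -/
noncomputable def cechρ (g : Fin t → R) {s s' : Finset (Fin t)} (h : s ⊆ s') :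
    Localization.Away (cechProd g s) →ₗ[R] Localization.Away (cechProd g s') where
  toFun := IsLocalization.Away.lift (P := Localization.Away (cechProd g s'))
    (g := algebraMap R (Localization.Away (cechProd g s'))) (cechProd g s)
    (IsLocalization.Away.isUnit_of_dvd _ (Finset.prod_dvd_prod_of_subset _ _ _ h))
  map_add' := fun x y => map_add _ x y
  map_smul' := fun r x => by
    simp only [RingHom.id_apply, Algebra.smul_def]
    rw [map_mul, IsLocalization.Away.lift_eq]

/-- The Čech differential with its alternating signs. -/
noncomputable def cechD (g : Fin t → R) (j : ℕ) :
    CechTerm g j →ₗ[R] CechTerm g (j + 1) :=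
  LinearMap.pi fun s' =>
    ∑ ℓ ∈ (s' : Finset (Fin t)).attach,
      ((-1 : R) ^ ((s'.1.filter (fun m => m < ℓ.1)).card)) •
        ((cechρ g (Finset.erase_subset ℓ.1 s'.1)).comp
          (LinearMap.proj (⟨s'.1.erase ℓ.1, by
            simp [Finset.card_erase_of_mem ℓ.2, s'.2]⟩ :
              {s : Finset (Fin t) // s.card = j})))

/-- The `q`-th truncation of the Čech complex. -/
noncomputable def cechTrunc (g : Fin t → R) (q : ℕ) (j : ℕ) : Submodule R (CechTerm g j) :=
  Submodule.pi Set.univ fun s =>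
    Submodule.span R
      {(IsLocalization.Away.invSelf (S := Localization.Away (cechProd g s.1))
        (cechProd g s.1)) ^ q}

/-- The image of the previous Čech differential (zero in degree `0`). -/
noncomputable def cechPrevRange (g : Fin t → R) : (j : ℕ) → Submodule R (CechTerm g j)
  | 0 => ⊥
  | jj + 1 => LinearMap.range (cechD g jj)

/-- The `j`-th (Čech) local cohomology module `H^j_I(R)` for `I = (g1, …, gt)`. -/
abbrev cechH (g : Fin t → R) (j : ℕ) : Type :=
  ↥(LinearMap.ker (cechD g j)) ⧸
    Submodule.comap (LinearMap.ker (cechD g j)).subtype (cechPrevRange g j)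

/-- `Ȟ^j_e`, the image of the cohomology of the `e`-th truncated Čech complex in
`H^j_I(R)`. -/
noncomputable def cechHTrunc (g : Fin t → R) (q : ℕ) (j : ℕ) :
    Submodule R (cechH g j) :=
  Submodule.map
    (Submodule.comap (LinearMap.ker (cechD g j)).subtype (cechPrevRange g j)).mkQ
    (Submodule.comap (LinearMap.ker (cechD g j)).subtype (cechTrunc g q j))

end Cech

section Kunz

/-- `φ`-extension of the module of relations of a family `m`. -/
def relSpan {R S M ι : Type} [CommRing R] [CommRing S] [AddCommGroup M] [Module R M] [Fintype ι]
    (φ : R →+* S) (m : ι → M) : Submodule S (ι → S) :=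
  Submodule.span S {w | ∃ r : ι → R, ∑ i, r i • m i = 0 ∧ w = fun i => φ (r i)}

/-- Every relation over `S` is an `S`-combination of relations over `R`. -/
def RelInj {R S M M' : Type} [CommRing R] [CommRing S] [AddCommGroup M] [Module R M]
    [AddCommGroup M'] [Module S M'] (φ : R →+* S) (ψ : M → M') : Prop :=
  ∀ (ι : Type) [Fintype ι] (m : ι → M) (s : ι → S), ∑ i, s i • ψ (m i) = 0 → s ∈ relSpan φ m

lemma relSpan_mem {R S M ι : Type} [CommRing R] [CommRing S] [AddCommGroup M] [Module R M]
    [Fintype ι] (φ : R →+* S) (m : ι → M) (r : ι → R) (h : ∑ i, r i • m i = 0) :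
    (fun i => φ (r i)) ∈ relSpan φ m :=
  Submodule.subset_span ⟨r, h, rfl⟩

lemma relSpan_exists {R S M ι : Type} [CommRing R] [CommRing S] [AddCommGroup M] [Module R M]
    [Fintype ι] (φ : R →+* S) (m : ι → M) (s : ι → S) (h : s ∈ relSpan φ m) :
    ∃ (n : ℕ) (c : Fin n → S) (r : Fin n → ι → R), (∀ k, ∑ i, r k i • m i = 0) ∧
      ∀ i, s i = ∑ k, c k * φ (r k i) := by
  obtain ⟨n, c, w, hw⟩ := Submodule.mem_span_set'.1 h
  choose r hr hr' using fun k => (w k).2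
  refine ⟨n, c, r, hr, fun i => ?_⟩
  rw [← hw]
  simp only [Finset.sum_apply, Pi.smul_apply, smul_eq_mul]
  refine Finset.sum_congr rfl fun k _ => ?_
  rw [hr' k]

lemma relSpan_of_sum {R S M ι κ : Type} [CommRing R] [CommRing S] [AddCommGroup M] [Module R M]
    [Fintype ι] [Fintype κ] (φ : R →+* S) (m : ι → M) (s : ι → S) (c : κ → S) (r : κ → ι → R)
    (hr : ∀ k, ∑ i, r k i • m i = 0) (hs : ∀ i, s i = ∑ k, c k * φ (r k i)) :
    s ∈ relSpan φ m := by
  have : s = ∑ k, c k • (fun i => φ (r k i)) := by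
    ext i; simp [hs]
  rw [this]
  exact Submodule.sum_mem _ fun k _ => Submodule.smul_mem _ _ (relSpan_mem φ m _ (hr k))

section Crit
variable {R S : Type} [CommRing R] [CommRing S] (φ : R →+* S)

/-- The relation property for a single family of ring elements. -/
def RelFam {ι : Type} [Fintype ι] (a : ι → R) : Prop :=
  ∀ s : ι → S, ∑ i, s i * φ (a i) = 0 → s ∈ relSpan φ a

lemma relFam_unit {ι : Type} [Fintype ι] (a : ι → R) (y : ι → R) (hy : ∑ i, y i * a i = 1) :
    RelFam φ a := by
  classical
  intro s hs
  refine relSpan_of_sum (κ := ι) φ a s s (fun k i => (if i = k then 1 else 0) - a k * y i) ?_ ?_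
  · intro k
    simp only [smul_eq_mul, sub_mul, Finset.sum_sub_distrib, mul_assoc, ← Finset.mul_sum, hy]
    simp
  · intro i
    have : ∑ k, s k * φ ((if i = k then 1 else 0) - a k * y i)
        = s i - (∑ k, s k * φ (a k)) * φ (y i) := by
      simp only [map_sub, map_mul, mul_sub, Finset.sum_sub_distrib, Finset.sum_mul, mul_assoc]
      congr 1
      simp [apply_ite φ]
    rw [this, hs]; simp

lemma relFam_zero {ι : Type} [Fintype ι] (a : ι → R) (h : ∀ i, a i = 0) : RelFam φ a := by
  classical
  intro s hs
  refine relSpan_of_sum (κ := ι) φ a s s (fun k i => (if i = k then 1 else 0)) ?_ ?_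
  · intro k; simp [h]
  · intro i; simp [apply_ite φ]

variable {φ}
variable {R' S' : Type} [CommRing R'] [CommRing S'] {π : R →+* R'} {π' : S →+* S'}
  {φ' : R' →+* S'} {x : R}

/-- the common lifting step -/
lemma rel_lift (hπ : Function.Surjective π) (hπ' : Function.Surjective π')
    (hcomm : ∀ r, φ' (π r) = π' (φ r))
    (hk : ∀ r, π r = 0 → ∃ t, r = x * t) (hk' : ∀ s, π' s = 0 → ∃ t, s = φ x * t)
    {ι : Type} [Fintype ι] (a : ι → R) (hT : RelFam φ' (fun i => π (a i)))
    (s : ι → S) (hs : ∑ i, s i * φ (a i) = 0) :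
    ∃ (n : ℕ) (c : Fin n → S) (r : Fin n → ι → R) (t : Fin n → R) (s' : ι → S),
      (∀ k, ∑ i, r k i * a i = x * t k) ∧ ∀ i, s i = ∑ k, c k * φ (r k i) + φ x * s' i := by
  have h1 := hT (fun i => π' (s i)) (by
    have := congrArg π' hs
    simpa [map_sum, hcomm] using this)
  obtain ⟨n, c, r, hr, hc⟩ := relSpan_exists _ _ _ h1
  choose c' hc' using fun k => hπ' (c k)
  choose r' hr' using fun k i => hπ (r k i)
  choose t ht using fun k => hk (∑ i, r' k i * a i) (by
    have := hr k
    simp only [smul_eq_mul] at this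
    simp [map_sum, hr', this])
  choose s' hs' using fun i => hk' (s i - ∑ k, c' k * φ (r' k i)) (by
    have := hc i
    simp [this, hc', ← hcomm, hr'])
  refine ⟨n, c', r', t, s', ht, fun i => ?_⟩
  rw [← hs' i]; ring

lemma relFam_A (hπ : Function.Surjective π) (hπ' : Function.Surjective π')
    (hcomm : ∀ r, φ' (π r) = π' (φ r))
    (hk : ∀ r, π r = 0 → ∃ t, r = x * t) (hk' : ∀ s, π' s = 0 → ∃ t, s = φ x * t)
    (hreg : ∀ c, φ x * c = 0 → c = 0)
    {ι : Type} [Fintype ι] (a : ι → R) (hT : RelFam φ' (fun i => π (a i)))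
    (y : ι → R) (hy : ∑ i, y i * a i = x) : RelFam φ a := by
  classical
  intro s hs
  obtain ⟨n, c, r, t, s', hr, hc⟩ := rel_lift hπ hπ' hcomm hk hk' a hT s hs
  have hz : ∑ k, c k * φ (t k) + ∑ i, s' i * φ (a i) = 0 := by
    apply hreg
    calc _ = ∑ k, c k * φ (x * t k) + ∑ i, (φ x * s' i) * φ (a i) := by
          simp only [mul_add, Finset.mul_sum, map_mul]
          congr 1 <;> exact Finset.sum_congr rfl fun k _ => by ring
      _ = ∑ i, s i * φ (a i) := by
          simp only [hc, add_mul, Finset.sum_add_distrib, Finset.sum_mul]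
          congr 1
          rw [Finset.sum_comm]
          refine Finset.sum_congr rfl fun k _ => ?_
          rw [← hr, map_sum, Finset.mul_sum]
          exact Finset.sum_congr rfl fun k _ => by rw [map_mul]; ring
      _ = 0 := hs
  refine relSpan_of_sum (κ := Fin n ⊕ ι) φ a s (Sum.elim c s')
    (Sum.elim (fun k i => r k i - t k * y i)
      (fun k i => (if i = k then x else 0) - a k * y i)) ?_ ?_
  · rintro (k | k)
    · simp only [Sum.elim_inl, smul_eq_mul, sub_mul, Finset.sum_sub_distrib, mul_assoc,
        ← Finset.mul_sum, hy, hr]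
      ring
    · simp only [Sum.elim_inr, smul_eq_mul, sub_mul, Finset.sum_sub_distrib, mul_assoc,
        ← Finset.mul_sum, hy]
      simp [mul_comm]
  · intro i
    rw [Fintype.sum_sum_type]
    simp only [Sum.elim_inl, Sum.elim_inr, map_sub, map_mul, mul_sub, Finset.sum_sub_distrib]
    have e1 : ∑ k, s' k * φ (if i = k then x else 0) = φ x * s' i := by
      simp [apply_ite φ, mul_comm]
    have e2 : (∑ k, c k * (φ (t k) * φ (y i))) + ∑ k, s' k * (φ (a k) * φ (y i)) = 0 := by
      rw [← zero_mul (φ (y i)), ← hz, add_mul, Finset.sum_mul, Finset.sum_mul]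
      simp only [mul_assoc]
    rw [e1, hc i]
    linear_combination e2

lemma relFam_B [IsNoetherianRing S] (hxS : Ideal.span {φ x} ≤ Ideal.jacobson ⊥)
    (hπ : Function.Surjective π) (hπ' : Function.Surjective π')
    (hcomm : ∀ r, φ' (π r) = π' (φ r))
    (hk : ∀ r, π r = 0 → ∃ t, r = x * t) (hk' : ∀ s, π' s = 0 → ∃ t, s = φ x * t)
    (hreg : ∀ c, φ x * c = 0 → c = 0)
    {ι : Type} [Fintype ι] (a : ι → R) (hT : RelFam φ' (fun i => π (a i)))
    (hI : ∀ t, (∃ r : ι → R, ∑ i, r i * a i = x * t) → ∃ y : ι → R, ∑ i, y i * a i = t) :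
    RelFam φ a := by
  let L : (ι → S) →ₗ[S] S := ∑ i, (φ (a i)) • LinearMap.proj i
  have hL : ∀ s, L s = ∑ i, s i * φ (a i) := fun s => by
    simp [L, mul_comm]
  have key : LinearMap.ker L ≤ relSpan φ a := by
    refine Submodule.le_of_le_smul_of_le_jacobson_bot (I := Ideal.span {φ x})
      (IsNoetherian.noetherian _) hxS ?_
    intro s hs
    rw [LinearMap.mem_ker, hL] at hs
    obtain ⟨n, c, r, t, s', hr, hc⟩ := rel_lift hπ hπ' hcomm hk hk' a hT s hs
    choose y hy using fun k => hI (t k) ⟨r k, hr k⟩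
    have h1 : (fun i => ∑ k, c k * φ (r k i - x * y k i)) ∈ relSpan φ a := by
      refine relSpan_of_sum φ a _ c (fun k i => r k i - x * y k i) ?_ (fun i => rfl)
      intro k
      simp only [smul_eq_mul, sub_mul, Finset.sum_sub_distrib, mul_assoc, ← Finset.mul_sum, hy, hr]
      ring
    have h2 : s = (fun i => ∑ k, c k * φ (r k i - x * y k i)) +
        φ x • (fun i => s' i + ∑ k, c k * φ (y k i)) := by
      ext i
      simp only [Pi.add_apply, Pi.smul_apply, smul_eq_mul, map_sub, map_mul, mul_sub,
        Finset.sum_sub_distrib, mul_add, hc i, Finset.mul_sum]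
      have : ∑ k, c k * (φ x * φ (y k i)) = ∑ k, φ x * (c k * φ (y k i)) :=
        Finset.sum_congr rfl fun k _ => by ring
      rw [this]; ring
    rw [h2]
    refine Submodule.add_mem_sup h1 (Submodule.smul_mem_smul (Ideal.mem_span_singleton_self _) ?_)
    rw [LinearMap.mem_ker]
    apply hreg
    have h3 : relSpan φ a ≤ LinearMap.ker L := by
      refine Submodule.span_le.2 ?_
      rintro w ⟨r, hr, rfl⟩
      simp only [smul_eq_mul] at hr
      simp only [SetLike.mem_coe, LinearMap.mem_ker, hL, ← map_mul, ← map_sum, hr, map_zero]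
    have h4 : L s = 0 := by rw [hL, hs]
    rw [h2, map_add, h3 h1, zero_add, map_smul, smul_eq_mul] at h4
    exact h4
  intro s hs
  exact key (by rw [LinearMap.mem_ker, hL, hs])

lemma relFam_C [IsNoetherianRing R] {ι : Type} [Fintype ι] (a : ι → R) (b : R)
    (h1 : RelFam φ (fun o : Option ι => o.elim b a))
    (h2 : ∀ (κ : Type) [Fintype κ] (u : κ → R),
      (∀ z, z ∈ Ideal.span (Set.range u) ↔ z * b ∈ Ideal.span (Set.range a)) → RelFam φ u) :
    RelFam φ a := by
  intro s hs
  obtain ⟨n, c, r, hr, hc⟩ := relSpan_exists _ _ _ (h1 (fun o => o.elim 0 s) (by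
    rw [Fintype.sum_option]; simpa using hs))
  -- generators of the colon ideal
  let Q : Ideal R := Submodule.comap (LinearMap.mulRight R b) (Ideal.span (Set.range a))
  have hQ : ∀ z, z ∈ Q ↔ z * b ∈ Ideal.span (Set.range a) := fun z => Iff.rfl
  obtain ⟨G, hG⟩ := (IsNoetherian.noetherian Q : Q.FG)
  have hGQ : ∀ w : G, ∃ z : ι → R, ∑ i, z i * a i = (w : R) * b := fun w => by
    have : (w : R) ∈ Q := hG ▸ Submodule.subset_span w.2
    rw [hQ, Ideal.mem_span_range_iff_exists_fun] at this
    exact this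
  choose z hz using hGQ
  have hrn : ∀ k, r k none * b = - ∑ i, r k (some i) * a i := fun k => by
    have := hr k
    rw [Fintype.sum_option] at this
    simp only [Option.elim, smul_eq_mul] at this
    linear_combination this
  let u : Fin n ⊕ G → R := Sum.elim (fun k => r k none) (fun w => (w : R))
  have hu : ∀ z, z ∈ Ideal.span (Set.range u) ↔ z * b ∈ Ideal.span (Set.range a) := by
    intro y
    rw [← hQ]
    have : Ideal.span (Set.range u) = Q := by
      apply le_antisymm
      · rw [Ideal.span_le]
        rintro _ ⟨k | w, rfl⟩
        · change r k none ∈ Q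
          rw [hQ, hrn]
          refine neg_mem (Ideal.sum_mem _ fun i _ => Ideal.mul_mem_left _ _
            (Ideal.subset_span ⟨i, rfl⟩))
        · change (w : R) ∈ Q
          exact hG ▸ Submodule.subset_span w.2
      · rw [← hG]
        exact Submodule.span_mono fun w hw => ⟨Sum.inr ⟨w, hw⟩, rfl⟩
    rw [this]
  obtain ⟨l, d, v, hv, hd⟩ := relSpan_exists _ _ _ (h2 _ u hu (Sum.elim c 0) (by
    rw [Fintype.sum_sum_type]
    have := hc none
    simp only [Option.elim] at this
    simpa [u] using this.symm))
  have hv' : ∀ q, ∑ k, v q (Sum.inl k) * r k none + ∑ w : G, v q (Sum.inr w) * (w : R) = 0 := by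
    intro q
    have := hv q
    rw [Fintype.sum_sum_type] at this
    simpa [u] using this
  refine relSpan_of_sum φ a s d (fun q i => ∑ k, v q (Sum.inl k) * r k (some i)
    - ∑ w : G, v q (Sum.inr w) * z w i) ?_ ?_
  · intro q
    simp only [smul_eq_mul, sub_mul, Finset.sum_sub_distrib, Finset.sum_mul]
    rw [Finset.sum_comm, Finset.sum_comm (γ := ι)]
    simp only [mul_assoc, ← Finset.mul_sum, hz]
    have e : ∀ k, ∑ i, r k (some i) * a i = - (r k none * b) := fun k => by rw [hrn]; ring
    simp only [e]
    have := congrArg (· * b) (hv' q)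
    simp only [add_mul, Finset.sum_mul, zero_mul] at this
    simp only [mul_neg, Finset.sum_neg_distrib, ← mul_assoc]
    linear_combination - this
  · intro i
    have h5 := hc (some i)
    simp only [Option.elim] at h5
    rw [h5]
    have h6 : ∀ k, c k = ∑ q, d q * φ (v q (Sum.inl k)) := fun k => by simpa using hd (Sum.inl k)
    have h7 : ∀ w : G, ∑ q, d q * φ (v q (Sum.inr w)) = 0 := fun w => by
      simpa using (hd (Sum.inr w)).symm
    simp only [map_sub, map_sum, map_mul, mul_sub, Finset.sum_sub_distrib, Finset.mul_sum]
    rw [Finset.sum_comm, Finset.sum_comm (γ := Fin l)]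
    have e1 : ∑ w : G, ∑ q, d q * (φ (v q (Sum.inr w)) * φ (z w i)) = 0 := by
      refine Finset.sum_eq_zero fun w _ => ?_
      simp only [← mul_assoc, ← Finset.sum_mul, h7, zero_mul]
    rw [e1, sub_zero]
    refine Finset.sum_congr rfl fun k _ => ?_
    rw [h6]
    simp only [← mul_assoc, ← Finset.sum_mul]

/-- Local criterion of flatness along one regular element, in equational form. -/
theorem relFam_all [IsNoetherianRing R] [IsNoetherianRing S]
    (hxS : Ideal.span {φ x} ≤ Ideal.jacobson ⊥)
    (hπ : Function.Surjective π) (hπ' : Function.Surjective π')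
    (hcomm : ∀ r, φ' (π r) = π' (φ r))
    (hk : ∀ r, π r = 0 → ∃ t, r = x * t) (hk' : ∀ s, π' s = 0 → ∃ t, s = φ x * t)
    (hreg : ∀ c, φ x * c = 0 → c = 0)
    (hT : ∀ (ι : Type) [Fintype ι] (a : ι → R'), RelFam φ' a)
    (ι : Type) [Fintype ι] (a : ι → R) : RelFam φ a := by
  suffices H : ∀ I : Ideal R, ∀ (ι : Type) [Fintype ι] (a : ι → R),
      Ideal.span (Set.range a) = I → RelFam φ a from H _ ι a rfl
  intro I
  induction I using IsNoetherian.induction with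
  | hgt I ih =>
  intro ι _ a ha
  by_cases hI : ∀ t, x * t ∈ I → t ∈ I
  · refine relFam_B hxS hπ hπ' hcomm hk hk' hreg a (hT _ _) ?_
    rintro t ⟨r, hr⟩
    have := hI t (by rw [← ha, Ideal.mem_span_range_iff_exists_fun]; exact ⟨r, hr⟩)
    rwa [← ha, Ideal.mem_span_range_iff_exists_fun] at this
  · push Not at hI
    obtain ⟨b, hb, hb'⟩ := hI
    refine relFam_C a b ?_ ?_
    · refine ih (Ideal.span (Set.range (fun o : Option ι => o.elim b a))) ?_ _ _ rfl
      refine lt_of_le_of_ne ?_ ?_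
      · rw [← ha]
        apply Ideal.span_mono
        rintro _ ⟨i, rfl⟩
        exact ⟨some i, rfl⟩
      · intro h
        exact hb' (h ▸ Ideal.subset_span ⟨none, rfl⟩)
    · intro κ _ u hu
      have : x ∈ Ideal.span (Set.range u) := by rw [hu, ha]; exact hb
      rw [Ideal.mem_span_range_iff_exists_fun] at this
      obtain ⟨y, hy⟩ := this
      exact relFam_A hπ hπ' hcomm hk hk' hreg u (hT _ _) y hy

end Crit
end Kunz
section KunzLocal
open IsLocalRing

/-- regular sequences modulo an ideal -/
def RSeq {S : Type} [CommRing S] : List S → Ideal S → Prop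
  | [], _ => True
  | x :: xs, J => (∀ c, x * c ∈ J → c ∈ J) ∧ RSeq xs (J ⊔ Ideal.span {x})

lemma mem_sup_singleton {S : Type} [CommRing S] {J : Ideal S} {x y : S} :
    y ∈ J ⊔ Ideal.span {x} ↔ ∃ u, y - x * u ∈ J := by
  rw [Submodule.mem_sup]
  constructor
  · rintro ⟨a, ha, b, hb, rfl⟩
    obtain ⟨u, rfl⟩ := Ideal.mem_span_singleton'.1 hb
    exact ⟨u, by convert ha using 1; ring⟩
  · rintro ⟨u, hu⟩
    exact ⟨_, hu, x * u, Ideal.mem_span_singleton'.2 ⟨u, mul_comm _ _⟩, by ring⟩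

lemma RSeq_comap {S S' : Type} [CommRing S] [CommRing S'] (f : S →+* S')
    (hf : Function.Surjective f) (xs : List S) (J : Ideal S') :
    RSeq (xs.map f) J ↔ RSeq xs (J.comap f) := by
  induction xs generalizing J with
  | nil => simp [RSeq]
  | cons x xs ih =>
    simp only [List.map_cons, RSeq]
    rw [ih]
    have : (J ⊔ Ideal.span {f x}).comap f = J.comap f ⊔ Ideal.span {x} := by
      ext y
      rw [Ideal.mem_comap, mem_sup_singleton, mem_sup_singleton]
      constructor
      · rintro ⟨u, hu⟩
        obtain ⟨v, rfl⟩ := hf u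
        exact ⟨v, by simpa using hu⟩
      · rintro ⟨v, hv⟩
        exact ⟨f v, by simpa using hv⟩
    rw [this]
    refine and_congr ?_ Iff.rfl
    constructor
    · intro h c hc
      exact h (f c) (by simpa using hc)
    · intro h c hc
      obtain ⟨c, rfl⟩ := hf c
      exact h c (by simpa using hc)

lemma RSeq_ext {S : Type} [CommRing S] (xs : List S) (D B C : Ideal S) (b : S)
    (hB : B = D ⊔ Ideal.span {b}) (hC : ∀ u, u ∈ C ↔ b * u ∈ D)
    (h1 : RSeq xs B) (h2 : RSeq xs C) : RSeq xs D := by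
  induction xs generalizing D B C with
  | nil => trivial
  | cons x xs ih =>
    obtain ⟨h1, h1'⟩ := h1
    obtain ⟨h2, h2'⟩ := h2
    refine ⟨?_, ih (D ⊔ Ideal.span {x}) (B ⊔ Ideal.span {x}) (C ⊔ Ideal.span {x}) ?_ ?_ h1' h2'⟩
    · intro c hc
      have hcB : c ∈ B := h1 c (hB ▸ Ideal.mem_sup_left hc)
      rw [hB, mem_sup_singleton] at hcB
      obtain ⟨u, hu⟩ := hcB
      have : u ∈ C := h2 u ((hC _).2 (by
        have := D.sub_mem hc (D.mul_mem_left x hu)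
        convert this using 1; ring))
      have := D.add_mem hu ((hC u).1 this)
      convert this using 1; ring
    · rw [hB, sup_right_comm]
    · intro u
      rw [mem_sup_singleton, mem_sup_singleton]
      constructor
      · rintro ⟨v, hv⟩
        exact ⟨b * v, by convert (hC _).1 hv using 1; ring⟩
      · rintro ⟨v, hv⟩
        have hvB : v ∈ B := by
          apply h1
          rw [hB, mem_sup_singleton]
          exact ⟨u, by convert D.neg_mem hv using 1; ring⟩
        rw [hB, mem_sup_singleton] at hvB
        obtain ⟨w, hw⟩ := hvB
        refine ⟨w, (hC _).2 ?_⟩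
        convert D.add_mem hv (D.mul_mem_left x hw) using 1; ring

lemma RSeq_pow_aux {S : Type} [CommRing S] (xs : List S) (J : Ideal S) (x : S)
    (hx : ∀ c, x * c ∈ J → c ∈ J) (h : RSeq xs (J ⊔ Ideal.span {x})) (n : ℕ) :
    RSeq xs (J ⊔ Ideal.span {x ^ (n + 1)}) := by
  have hpow : ∀ n c, x ^ n * c ∈ J → c ∈ J := by
    intro n
    induction n with
    | zero => intro c hc; simpa using hc
    | succ n ih => intro c hc; exact hx _ (ih _ (by convert hc using 1; ring))
  induction n with
  | zero => simpa using h
  | succ n ih =>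
    refine RSeq_ext xs _ (J ⊔ Ideal.span {x ^ (n + 1)}) (J ⊔ Ideal.span {x}) (x ^ (n + 1)) ?_ ?_
      ih h
    · rw [sup_assoc]
      congr 1
      symm
      rw [sup_eq_right, Ideal.span_singleton_le_span_singleton]
      exact pow_dvd_pow _ (Nat.le_succ _)
    · intro u
      rw [mem_sup_singleton, mem_sup_singleton]
      constructor
      · rintro ⟨v, hv⟩
        exact ⟨v, by convert J.mul_mem_left (x ^ (n + 1)) hv using 1; ring⟩
      · rintro ⟨v, hv⟩
        exact ⟨v, hpow (n + 1) _ (by convert hv using 1; ring)⟩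

lemma RSeq_pow {S : Type} [CommRing S] (xs : List S) (J : Ideal S) (n : ℕ)
    (h : RSeq xs J) : RSeq (xs.map (· ^ (n + 1))) J := by
  induction xs generalizing J with
  | nil => trivial
  | cons x xs ih =>
    refine ⟨?_, ih _ (RSeq_pow_aux xs J x h.1 h.2 n)⟩
    generalize n + 1 = n
    induction n with
    | zero => intro c hc; simpa using hc
    | succ n ih' => intro c hc; exact h.1 _ (ih' _ (by convert hc using 1; ring))

lemma map_max_of_surj {R R' : Type} [CommRing R] [CommRing R'] [IsLocalRing R] [IsLocalRing R']
    (f : R →+* R') (hf : Function.Surjective f) :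
    (maximalIdeal R).map f = maximalIdeal R' := by
  rcases Ideal.map_eq_top_or_isMaximal_of_surjective f hf (maximalIdeal.isMaximal R) with h | h
  · exfalso
    have h1 : (1 : R') ∈ (maximalIdeal R).map f := h ▸ Submodule.mem_top
    obtain ⟨r, hr, hr'⟩ := (Ideal.mem_map_iff_of_surjective f hf).1 h1
    have hu : IsUnit (1 - r) := by
      by_contra hn
      have : (1 - r) + r ∈ maximalIdeal R := add_mem ((mem_maximalIdeal _).2 hn) hr
      rw [sub_add_cancel] at this
      exact (Ideal.ne_top_iff_one _).1 (maximalIdeal.isMaximal R).ne_top this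
    have := hu.map f
    rw [map_sub, map_one, hr', sub_self] at this
    exact not_isUnit_zero this
  · exact eq_maximalIdeal h

theorem relFam_of_rseq (n : ℕ) : ∀ (R S : Type) [CommRing R] [CommRing S] [IsNoetherianRing R]
    [IsNoetherianRing S] [IsLocalRing R] [IsLocalRing S] (φ : R →+* S) (xs : List R),
    xs.length = n → Ideal.span {r | r ∈ xs} = maximalIdeal R →
    (∀ r ∈ xs, φ r ∈ maximalIdeal S) → RSeq (xs.map φ) ⊥ →
    ∀ (ι : Type) [Fintype ι] (a : ι → R), RelFam φ a := by
  induction n with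
  | zero =>
    intro R S _ _ _ _ _ _ φ xs hlen hm hloc hrs ι _ a
    obtain rfl := List.length_eq_zero_iff.1 hlen
    have hbot : maximalIdeal R = ⊥ := by
      rw [← hm]; simp
    by_cases h : ∀ i, a i = 0
    · exact relFam_zero φ a h
    · classical
      push Not at h
      obtain ⟨i, hi⟩ := h
      have hu : IsUnit (a i) := by
        by_contra hn
        have := (mem_maximalIdeal _).2 hn
        rw [hbot] at this
        exact hi this
      obtain ⟨b, hb⟩ := hu.exists_left_inv
      exact relFam_unit φ a (Pi.single i b) (by
        rw [Finset.sum_eq_single i]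
        · simpa using hb
        · intro k _ hk; simp [hk]
        · simp)
  | succ n ih =>
    intro R S _ _ _ _ _ _ φ xs hlen hm hloc hrs
    obtain _ | ⟨x, xs⟩ := xs
    · simp at hlen
    have hxm : x ∈ maximalIdeal R := hm ▸ Ideal.subset_span (by simp)
    have hxS : φ x ∈ maximalIdeal S := hloc x (by simp)
    have hI : Ideal.span {x} ≤ maximalIdeal R := by
      rwa [Ideal.span_singleton_le_iff_mem]
    have hJ : Ideal.span {φ x} ≤ maximalIdeal S := by
      rwa [Ideal.span_singleton_le_iff_mem]
    have hI' : Ideal.span {x} ≠ ⊤ := fun h =>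
      (maximalIdeal.isMaximal R).ne_top (top_le_iff.1 (h ▸ hI))
    have hJ' : Ideal.span {φ x} ≠ ⊤ := fun h =>
      (maximalIdeal.isMaximal S).ne_top (top_le_iff.1 (h ▸ hJ))
    have : Nontrivial (R ⧸ Ideal.span {x}) := Ideal.Quotient.nontrivial_iff.2 hI'
    have : Nontrivial (S ⧸ Ideal.span {φ x}) := Ideal.Quotient.nontrivial_iff.2 hJ'
    have : IsLocalRing (R ⧸ Ideal.span {x}) :=
      IsLocalRing.of_surjective' _ Ideal.Quotient.mk_surjective
    have : IsLocalRing (S ⧸ Ideal.span {φ x}) :=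
      IsLocalRing.of_surjective' _ Ideal.Quotient.mk_surjective
    let π := Ideal.Quotient.mk (Ideal.span {x})
    let π' := Ideal.Quotient.mk (Ideal.span {φ x})
    have hle : Ideal.span {x} ≤ (Ideal.span {φ x}).comap φ := by
      rw [Ideal.span_singleton_le_iff_mem]
      exact Ideal.mem_span_singleton_self _
    let φ' := Ideal.quotientMap (Ideal.span {φ x}) φ hle
    have hcomm : ∀ r, φ' (π r) = π' (φ r) := fun r => Ideal.quotientMap_mk
    have hmap : (xs.map π).map φ' = (xs.map φ).map π' := by
      simp only [List.map_map]
      exact List.map_congr_left fun r _ => hcomm r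
    have hT : ∀ (ι : Type) [Fintype ι] (a : ι → R ⧸ Ideal.span {x}), RelFam φ' a := by
      refine ih _ _ φ' (xs.map π) (by simpa using hlen) ?_ ?_ ?_
      · rw [← map_max_of_surj π Ideal.Quotient.mk_surjective, ← hm, Ideal.map_span]
        apply le_antisymm
        · apply Ideal.span_mono
          intro r hr
          obtain ⟨y, hy, rfl⟩ := List.mem_map.1 hr
          exact ⟨y, by simp [hy], rfl⟩
        · rw [Ideal.span_le]
          rintro _ ⟨y, hy, rfl⟩
          rcases List.mem_cons.1 hy with rfl | hy
          · have : π y = 0 := Ideal.Quotient.eq_zero_iff_mem.2 (Ideal.mem_span_singleton_self _)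
            rw [this]; exact zero_mem _
          · exact Ideal.subset_span (List.mem_map.2 ⟨y, hy, rfl⟩)
      · intro r hr
        obtain ⟨y, hy, rfl⟩ := List.mem_map.1 hr
        rw [hcomm, ← map_max_of_surj π' Ideal.Quotient.mk_surjective]
        exact Ideal.mem_map_of_mem _ (hloc y (by simp [hy]))
      · rw [hmap, RSeq_comap π' Ideal.Quotient.mk_surjective]
        have h2 := hrs.2
        rw [bot_sup_eq] at h2
        convert h2 using 1
        ext y
        rw [Ideal.mem_comap]
        exact Ideal.Quotient.eq_zero_iff_mem
    refine relFam_all (x := x) (π := π) (π' := π') (φ' := φ') ?_ Ideal.Quotient.mk_surjective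
      Ideal.Quotient.mk_surjective hcomm ?_ ?_ ?_ hT
    · rw [jacobson_eq_maximalIdeal _ bot_ne_top]; exact hJ
    · intro r hr
      obtain ⟨t, ht⟩ := Ideal.mem_span_singleton'.1 (Ideal.Quotient.eq_zero_iff_mem.1 hr)
      exact ⟨t, by rw [← ht, mul_comm]⟩
    · intro r hr
      obtain ⟨t, ht⟩ := Ideal.mem_span_singleton'.1 (Ideal.Quotient.eq_zero_iff_mem.1 hr)
      exact ⟨t, by rw [← ht, mul_comm]⟩
    · intro c hc
      have := hrs.1 c (by rw [hc]; exact zero_mem _)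
      simpa using this

theorem regular_rseq (d : ℕ) : ∀ (R : Type) [CommRing R] [IsNoetherianRing R] [IsLocalRing R]
    (s : Finset R), Ideal.span (s : Set R) = maximalIdeal R → s.card ≤ d →
    ((d : ℕ) : WithBot ℕ∞) ≤ ringKrullDim R →
    IsDomain R ∧ ∃ xs : List R, Ideal.span {r | r ∈ xs} = maximalIdeal R ∧ RSeq xs ⊥ := by
  induction d with
  | zero =>
    intro R _ _ _ s hs hcard _
    have : s = ∅ := Finset.card_eq_zero.1 (Nat.le_zero.1 hcard)
    subst this
    have hbot : maximalIdeal R = ⊥ := by rw [← hs]; simp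
    have hF : IsField R := isField_iff_maximalIdeal_eq.2 hbot
    exact ⟨hF.isDomain, [], by simp [hbot], trivial⟩
  | succ d ih =>
    intro R _ _ _ s hs hcard hdim
    classical
    -- choose `x`
    have hmm : ¬ (maximalIdeal R ∈ minimalPrimes R) := by
      intro h
      have h0 : ringKrullDim R ≤ 0 := by
        rw [← maximalIdeal_height_eq_ringKrullDim, Ideal.height_eq_zero_iff.2 h]
        rfl
      have := hdim.trans h0
      norm_cast at this
    obtain ⟨x, hxm, hx2, hxmin⟩ : ∃ x ∈ maximalIdeal R, x ∉ maximalIdeal R ^ 2 ∧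
        ∀ Q ∈ minimalPrimes R, x ∉ Q := by
      by_contra hcon
      push Not at hcon
      have hfin : (minimalPrimes R).Finite := minimalPrimes.finite_of_isNoetherianRing R
      have hsub : ((maximalIdeal R : Ideal R) : Set R) ⊆
          ⋃ i ∈ ((insert (maximalIdeal R ^ 2) hfin.toFinset : Finset (Ideal R)) : Set (Ideal R)),
            ((id i : Ideal R) : Set R) := by
        intro y hy
        by_cases hy2 : y ∈ maximalIdeal R ^ 2
        · exact Set.mem_biUnion (x := maximalIdeal R ^ 2) (by simp) hy2
        · obtain ⟨Q, hQ, hyQ⟩ := hcon y hy hy2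
          exact Set.mem_biUnion (x := Q) (by simp [hQ]) hyQ
      rw [Ideal.subset_union_prime (maximalIdeal R ^ 2) (maximalIdeal R ^ 2)] at hsub
      · obtain ⟨I, hI, hle⟩ := hsub
        rcases Finset.mem_insert.1 hI with rfl | hI
        · have h0 : maximalIdeal R = ⊥ := by
            refine Submodule.eq_bot_of_le_smul_of_le_jacobson_bot (maximalIdeal R) _
              (IsNoetherian.noetherian _) ?_ (jacobson_eq_maximalIdeal _ bot_ne_top).ge
            simpa [pow_two] using hle
          apply hmm
          have hF : IsField R := isField_iff_maximalIdeal_eq.2 h0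
          have := hF.isDomain
          rw [h0, IsDomain.minimalPrimes_eq_singleton_bot]
          rfl
        · have hI' : I ∈ minimalPrimes R := by simpa using hI
          have : I = maximalIdeal R :=
            le_antisymm (le_maximalIdeal hI'.1.1.ne_top) hle
          exact hmm (this ▸ hI')
      · intro i hi hne _
        rcases Finset.mem_insert.1 hi with rfl | hi
        · exact absurd rfl hne
        · have hI' : i ∈ minimalPrimes R := by simpa using hi
          exact hI'.1.1
    have hI : Ideal.span {x} ≤ maximalIdeal R := by
      rwa [Ideal.span_singleton_le_iff_mem]
    have hI' : Ideal.span {x} ≠ ⊤ := fun h =>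
      (maximalIdeal.isMaximal R).ne_top (top_le_iff.1 (h ▸ hI))
    have : Nontrivial (R ⧸ Ideal.span {x}) := Ideal.Quotient.nontrivial_iff.2 hI'
    have : IsLocalRing (R ⧸ Ideal.span {x}) :=
      IsLocalRing.of_surjective' _ Ideal.Quotient.mk_surjective
    let π := Ideal.Quotient.mk (Ideal.span {x})
    have hπx : π x = 0 := Ideal.Quotient.eq_zero_iff_mem.2 (Ideal.mem_span_singleton_self _)
    -- generators of the quotient
    obtain ⟨y, hy, hyspan⟩ : ∃ y ∈ s, π y ∈ Ideal.span (((s.erase y).image π : Finset _) : Set _) := by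
      have hxs : x ∈ Ideal.span (s : Set R) := hs ▸ hxm
      obtain ⟨c, -, hc⟩ := Submodule.mem_span_finset.1 hxs
      obtain ⟨y, hy, hcy⟩ : ∃ y ∈ s, c y ∉ maximalIdeal R := by
        by_contra hcon
        push Not at hcon
        apply hx2
        rw [← hc, pow_two]
        exact Ideal.sum_mem _ fun a ha => Ideal.mul_mem_mul (hcon a ha)
          (hs ▸ Ideal.subset_span ha)
      refine ⟨y, hy, ?_⟩
      have hu : IsUnit (c y) := by
        by_contra hn
        exact hcy ((mem_maximalIdeal _).2 hn)
      obtain ⟨b, hb⟩ := hu.exists_left_inv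
      have h1 := congrArg π hc
      rw [hπx, map_sum, ← Finset.add_sum_erase s _ hy] at h1
      have h2 : π y = - (π b * ∑ a ∈ s.erase y, π (c a • a)) := by
        have h3 : π y = π b * π (c y • y) := by
          rw [← map_mul, smul_eq_mul, ← mul_assoc, hb, one_mul]
        rw [h3, eq_neg_iff_add_eq_zero, ← mul_add, h1, mul_zero]
      rw [h2]
      refine neg_mem (Ideal.mul_mem_left _ _ (Ideal.sum_mem _ fun a ha => ?_))
      rw [smul_eq_mul, map_mul]
      exact Ideal.mul_mem_left _ _ (Ideal.subset_span (by
        simp only [Finset.coe_image]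
        exact ⟨a, ha, rfl⟩))
    have hgen : Ideal.span (((s.erase y).image π : Finset _) : Set (R ⧸ Ideal.span {x})) =
        maximalIdeal (R ⧸ Ideal.span {x}) := by
      rw [← map_max_of_surj π Ideal.Quotient.mk_surjective, ← hs, Ideal.map_span]
      apply le_antisymm
      · apply Ideal.span_mono
        rw [Finset.coe_image]
        exact Set.image_mono (by simp)
      · rw [Ideal.span_le]
        rintro _ ⟨z, hz, rfl⟩
        by_cases hzy : z = y
        · rw [hzy]; exact hyspan
        · refine Ideal.subset_span ?_
          simp only [Finset.coe_image]
          exact ⟨z, by simpa [hzy] using hz, rfl⟩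
    have hdim' : ((d : ℕ) : WithBot ℕ∞) ≤ ringKrullDim (R ⧸ Ideal.span {x}) := by
      have h1 := Ideal.height_le_ringKrullDim_quotient_add_one hxm
      rw [maximalIdeal_height_eq_ringKrullDim] at h1
      have h2 := hdim.trans h1
      rw [Nat.cast_succ] at h2
      exact ENat.WithBot.add_le_add_one_right_iff.1 h2
    obtain ⟨hdom, xs, hxs, hxsr⟩ := ih _ ((s.erase y).image π) hgen (by
      refine Finset.card_image_le.trans ?_
      rw [Finset.card_erase_of_mem hy]; omega) hdim'
    have hprime : (Ideal.span {x}).IsPrime := (Ideal.Quotient.isDomain_iff_prime _).1 hdom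
    obtain ⟨Q, hQ, hQx⟩ := Ideal.exists_minimalPrimes_le (I := (⊥ : Ideal R))
      (J := Ideal.span {x}) bot_le
    have hxQ : x ∉ Q := hxmin Q hQ
    have hQp : Q.IsPrime := hQ.1.1
    have hQ0 : Q = ⊥ := by
      refine Submodule.eq_bot_of_le_smul_of_le_jacobson_bot (Ideal.span {x}) Q
        (IsNoetherian.noetherian _) ?_ ((jacobson_eq_maximalIdeal _ bot_ne_top).ge.trans' hI)
      intro q hq
      obtain ⟨t, rfl⟩ := Ideal.mem_span_singleton'.1 (hQx hq)
      have ht : t ∈ Q := (hQp.mem_or_mem hq).resolve_right hxQ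
      rw [mul_comm]
      exact Submodule.smul_mem_smul (Ideal.mem_span_singleton_self _) ht
    have hR : IsDomain R := by
      rw [hQ0] at hQp
      exact IsDomain.of_bot_isPrime R
    refine ⟨hR, ?_⟩
    choose l hl using Ideal.Quotient.mk_surjective (I := Ideal.span {x})
    have hmapl : (xs.map l).map π = xs := by
      rw [List.map_map]
      conv_rhs => rw [← List.map_id xs]
      exact List.map_congr_left fun r _ => hl r
    refine ⟨x :: xs.map l, ?_, ?_, ?_⟩
    · apply le_antisymm
      · rw [Ideal.span_le]
        intro r hr
        rcases List.mem_cons.1 hr with rfl | hr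
        · exact hxm
        · obtain ⟨z, hz, rfl⟩ := List.mem_map.1 hr
          have : π (l z) ∈ maximalIdeal (R ⧸ Ideal.span {x}) := by
            rw [← hxs]; exact Ideal.subset_span (by simpa [π, hl] using hz)
          by_contra hn
          have hu : IsUnit (l z) := by
            by_contra h; exact hn ((mem_maximalIdeal _).2 h)
          exact (mem_maximalIdeal _).1 this (hu.map π)
      · intro r hr
        have h1 : π r ∈ Ideal.span {r | r ∈ xs} := by
          rw [hxs, ← map_max_of_surj π Ideal.Quotient.mk_surjective]
          exact Ideal.mem_map_of_mem _ hr
        have h2 : Ideal.span {r | r ∈ xs} = (Ideal.span {r | r ∈ xs.map l}).map π := by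
          rw [Ideal.map_span]
          congr 1
          ext z
          constructor
          · intro hz; exact ⟨l z, List.mem_map.2 ⟨z, hz, rfl⟩, hl z⟩
          · rintro ⟨w, hw, rfl⟩
            obtain ⟨z, hz, rfl⟩ := List.mem_map.1 hw
            have : π (l z) = z := hl z
            rw [this]; exact hz
        rw [h2, Ideal.mem_map_iff_of_surjective π Ideal.Quotient.mk_surjective] at h1
        obtain ⟨w, hw, hwr⟩ := h1
        have h3 : r - w ∈ Ideal.span {x} := by
          rw [← Ideal.Quotient.eq_zero_iff_mem]
          change π (r - w) = 0
          rw [map_sub, hwr, sub_self]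
        have h4 : Ideal.span {x} ≤ Ideal.span {r | r ∈ x :: xs.map l} := by
          rw [Ideal.span_singleton_le_iff_mem]; exact Ideal.subset_span (by simp)
        have h5 : Ideal.span {r | r ∈ xs.map l} ≤ Ideal.span {r | r ∈ x :: xs.map l} :=
          Ideal.span_mono fun z hz => List.mem_cons_of_mem _ hz
        have := add_mem (h4 h3) (h5 hw)
        rwa [sub_add_cancel] at this
    · intro c hc
      have hx0 : x ≠ 0 := fun h => hx2 (h ▸ zero_mem _)
      exact (mul_eq_zero.1 hc).resolve_left hx0
    · rw [bot_sup_eq]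
      have h := hxsr
      rw [← hmapl, RSeq_comap π Ideal.Quotient.mk_surjective] at h
      convert h using 1
      ext z
      rw [Ideal.mem_comap]
      exact Ideal.Quotient.eq_zero_iff_mem.symm

end KunzLocal

section KunzGlobal
open IsLocalRing

theorem relFam_regular_local (p : ℕ) (hp : p.Prime) (A : Type) [CommRing A] [IsNoetherianRing A]
    [IsLocalRing A] [ExpChar A p] (hA : IsRegularLocalRingStmt A) (ι : Type) [Fintype ι]
    (a : ι → A) : RelFam (frobenius A p) a := by
  obtain ⟨s, hs, hs'⟩ := Submodule.FG.exists_span_finset_card_eq_spanFinrank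
    (maximalIdeal A).fg_of_isNoetherianRing
  rw [spanFinrank_maximalIdeal_eq_finrank_cotangentSpace] at hs
  obtain ⟨-, xs, hxs, hr⟩ := regular_rseq _ A s hs' hs.le (le_of_eq hA.symm)
  refine relFam_of_rseq xs.length A A (frobenius A p) xs rfl hxs ?_ ?_ ι a
  · intro r hr
    rw [frobenius_def]
    refine Ideal.pow_mem_of_mem _ ?_ _ hp.pos
    rw [← hxs]; exact Ideal.subset_span hr
  · obtain ⟨n, rfl⟩ : ∃ n, p = n + 1 := ⟨p - 1, by have := hp.pos; omega⟩
    exact RSeq_pow xs ⊥ n hr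

lemma loc_common {R L ι : Type} [CommRing R] [CommRing L] [Algebra R L] (M : Submonoid R)
    [IsLocalization M L] [Fintype ι] (x y : ι → R)
    (h : ∀ i, algebraMap R L (x i) = algebraMap R L (y i)) :
    ∃ u ∈ M, ∀ i, u * x i = u * y i := by
  choose c hc using fun i => (IsLocalization.eq_iff_exists M L).1 (h i)
  refine ⟨((∏ i, c i : M) : R), (∏ i, c i : M).2, fun i => ?_⟩
  obtain ⟨d, hd⟩ : c i ∣ ∏ i, c i := Finset.dvd_prod_of_mem _ (Finset.mem_univ i)
  rw [hd]
  push_cast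
  rw [mul_comm (c i : R), mul_assoc, mul_assoc, hc]

lemma loc_denoms {R L ι : Type} [CommRing R] [CommRing L] [Algebra R L] (M : Submonoid R)
    [IsLocalization M L] [Fintype ι] (x : ι → L) :
    ∃ u ∈ M, ∃ y : ι → R, ∀ i, algebraMap R L u * x i = algebraMap R L (y i) := by
  obtain ⟨b, hb⟩ := IsLocalization.exist_integer_multiples_of_finite M x
  choose y hy using hb
  refine ⟨b, b.2, y, fun i => ?_⟩
  rw [hy, Algebra.smul_def]

theorem relFam_regular (p : ℕ) [Fact p.Prime] (R : Type) [CommRing R] [CharP R p]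
    (hreg : IsRegularRingStmt R) (ι : Type) [Fintype ι] (a : ι → R) :
    RelFam (frobenius R p) a := by
  have hp : p.Prime := Fact.out
  have := hreg.1
  intro s hs
  let K : Ideal R := (relSpan (frobenius R p) a).comap (LinearMap.toSpanSingleton R (ι → R) s)
  suffices hK : K = ⊤ by
    have : (1 : R) ∈ K := hK ▸ Submodule.mem_top
    simpa [K] using this
  by_contra hne
  obtain ⟨P, hP, hKP⟩ := Ideal.exists_le_maximal K hne
  have := hP.isPrime
  let L := Localization.AtPrime P
  have : CharP L p := by
    have h0 : ((p : ℕ) : L) = 0 := by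
      rw [← map_natCast (algebraMap R L), CharP.cast_eq_zero R p, map_zero]
    exact (CharP.charP_iff_prime_eq_zero hp).2 h0
  have : IsNoetherianRing L := IsLocalization.isNoetherianRing P.primeCompl L inferInstance
  have hloc := relFam_regular_local p hp L (hreg.2 P) ι (fun i => algebraMap R L (a i))
    (fun i => algebraMap R L (s i)) (by
      have := congrArg (algebraMap R L) hs
      simpa [frobenius_def] using this)
  obtain ⟨n, c, r, hr, hsr⟩ := relSpan_exists _ _ _ hloc
  obtain ⟨v, hv, C, hC⟩ := loc_denoms P.primeCompl c
  obtain ⟨w, hw, r', hr'⟩ := loc_denoms P.primeCompl (fun x : Fin n × ι => r x.1 x.2)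
  obtain ⟨u, hu, hu'⟩ := loc_common (L := L) P.primeCompl (fun k : Fin n => ∑ i, r' (k, i) * a i)
    (fun _ => 0) (by
      intro k
      have h1 : ∑ i, r k i * algebraMap R L (a i) = 0 := hr k
      simp only [map_sum, map_mul, map_zero, ← hr', mul_assoc]
      rw [← Finset.mul_sum, h1, mul_zero])
  obtain ⟨x, hx, hx'⟩ := loc_common (L := L) P.primeCompl (fun i => v * (u * w) ^ p * s i)
    (fun i => ∑ k, C k * (u * r' (k, i)) ^ p) (by
      intro i
      simp only [map_sum, map_mul, map_pow, ← hr', ← hC, hsr, Finset.mul_sum, frobenius_def]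
      refine Finset.sum_congr rfl fun k _ => ?_
      ring)
  have hmem : x * (v * (u * w) ^ p) ∈ K := by
    show (x * (v * (u * w) ^ p)) • s ∈ relSpan (frobenius R p) a
    refine relSpan_of_sum _ _ _ (fun k => x * C k) (fun k i => u * r' (k, i)) ?_ ?_
    · intro k
      have := hu' k
      simpa [Finset.mul_sum, mul_assoc] using this
    · intro i
      have := hx' i
      simp only [Finset.mul_sum, mul_assoc, Pi.smul_apply, smul_eq_mul, frobenius_def] at this ⊢
      exact this
  have h1 : x * (v * (u * w) ^ p) ∈ P.primeCompl :=
    mul_mem hx (mul_mem hv (pow_mem (mul_mem hu hw) _))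
  exact h1 (hKP hmem)

end KunzGlobal


section RelGen
open TensorProduct

lemma relInj_submodule {R S M M' : Type} [CommRing R] [CommRing S] [AddCommGroup M] [Module R M]
    [AddCommGroup M'] [Module S M'] (φ : R →+* S) (ψ : M → M') (h : RelInj φ ψ)
    (N : Submodule R M) (N' : Submodule S M') (ψ' : N → N') (hψ : ∀ x, (ψ' x : M') = ψ x) :
    RelInj φ ψ' := by
  intro ι _ m s hs
  have h1 := h ι (fun i => (m i : M)) s (by
    have := congrArg N'.subtype hs
    simpa [hψ] using this)
  obtain ⟨n, c, r, hr, hsr⟩ := relSpan_exists _ _ _ h1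
  refine relSpan_of_sum _ _ _ c r (fun k => ?_) hsr
  apply Subtype.ext
  simpa using hr k

lemma relInj_quot {R S M M' : Type} [CommRing R] [CommRing S] [AddCommGroup M] [Module R M]
    [AddCommGroup M'] [Module S M'] (φ : R →+* S) (ψ : M →ₛₗ[φ] M') (h : RelInj φ ψ)
    (B : Submodule R M) (B' : Submodule S M') (hB : B ≤ B'.comap ψ)
    (hB' : B' ≤ Submodule.span S (ψ '' B)) :
    RelInj φ (B.mapQ B' ψ hB) := by
  intro ι _ m s hs
  choose z hz using fun i => B.mkQ_surjective (m i)
  have h1 : ∑ i, s i • ψ (z i) ∈ B' := by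
    rw [← Submodule.Quotient.mk_eq_zero, ← hs, ← Submodule.mkQ_apply, map_sum]
    refine Finset.sum_congr rfl fun i _ => ?_
    rw [← hz i]; simp
  obtain ⟨n, c, w, hw⟩ := Submodule.mem_span_set'.1 (hB' h1)
  choose b hb hbw using fun k => (w k).2
  have h2 := h (ι ⊕ Fin n) (Sum.elim z b) (Sum.elim s (-c)) (by
    simp [← hw, hbw])
  obtain ⟨n', c', r, hr, hsr⟩ := relSpan_exists _ _ _ h2
  refine relSpan_of_sum _ _ _ c' (fun k i => r k (Sum.inl i)) (fun k => ?_)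
    (fun i => by simpa using hsr (Sum.inl i))
  have h3 := hr k
  simp only [Fintype.sum_sum_type, Sum.elim_inl, Sum.elim_inr] at h3
  have h4 := congrArg B.mkQ h3
  have h5 : B.mkQ (∑ x, r k (Sum.inr x) • b x) = 0 := by
    rw [Submodule.mkQ_apply, Submodule.Quotient.mk_eq_zero]
    exact Submodule.sum_mem _ fun x _ => B.smul_mem _ (hb x)
  rw [map_add, h5, add_zero, map_sum, map_zero] at h4
  rw [← h4]
  refine Finset.sum_congr rfl fun i _ => ?_
  rw [map_smul, hz]

lemma tens_smul {R S M : Type} [CommRing R] [AddCommMonoid S] [Module R S] [AddCommMonoid M]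
    [Module R M] (r : R) (s : S) (m : M) : (r • s) ⊗ₜ[R] m = s ⊗ₜ[R] (r • m) :=
  TensorProduct.smul_tmul r s m

theorem iso_of_relInj {R S M M' : Type} [CommRing R] [CommRing S] [AddCommGroup M] [Module R M]
    [AddCommGroup M'] [Module S M'] (φ : R →+* S) (ψ : M →ₛₗ[φ] M') (h : RelInj φ ψ)
    (hs : Submodule.span S (Set.range ψ) = ⊤) :
    Nonempty ((ModuleCat.extendScalars φ).obj (ModuleCat.of R M) ≅ ModuleCat.of S M') := by
  let f : ModuleCat.of R M ⟶ (ModuleCat.restrictScalars φ).obj (ModuleCat.of S M') :=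
    ModuleCat.ofHom (Y := (ModuleCat.restrictScalars φ).obj (ModuleCat.of S M'))
      { toFun := ψ
        map_add' := map_add ψ
        map_smul' := fun r x => ψ.map_smulₛₗ r x }
  let F := ModuleCat.ExtendRestrictScalarsAdj.HomEquiv.fromExtendScalars φ f
  let _ := Module.compHom S φ
  have hF : ∀ (s : S) (m : M), F.hom (s ⊗ₜ[R] m) = s • ψ m := fun s m => rfl
  let tt : S → M → ((ModuleCat.extendScalars φ).obj (ModuleCat.of R M)) := fun s m => s ⊗ₜ[R] m
  have hFt : ∀ (s : S) (m : M), F.hom (tt s m) = s • ψ m := fun s m => rfl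
  have t0 : ∀ s, tt s 0 = 0 := fun s => TensorProduct.tmul_zero _ _
  have tadd : ∀ s (ι : Type) (u : Finset ι) (m : ι → M), tt s (∑ i ∈ u, m i) = ∑ i ∈ u, tt s (m i) :=
    fun s ι u m => TensorProduct.tmul_sum _ _ _
  have tadd' : ∀ (ι : Type) (u : Finset ι) (s : ι → S) (m : M),
      tt (∑ i ∈ u, s i) m = ∑ i ∈ u, tt (s i) m :=
    fun ι u s m => TensorProduct.sum_tmul _ _ _
  have tsm : ∀ s r m, tt (s * φ r) m = tt s (r • m) := by
    intro s r m
    have : s * φ r = r • s := mul_comm _ _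
    rw [this]
    exact tens_smul r s m
  have hrep : ∀ z : ((ModuleCat.extendScalars φ).obj (ModuleCat.of R M)),
      ∃ (n : ℕ) (s : Fin n → S) (m : Fin n → M), z = ∑ i, tt (s i) (m i) := by
    intro z
    induction z using TensorProduct.induction_on with
    | zero => exact ⟨0, Fin.elim0, Fin.elim0, rfl⟩
    | tmul s m => exact ⟨1, fun _ => s, fun _ => m, by simp; rfl⟩
    | add x y hx hy =>
      obtain ⟨n, s, m, hx⟩ := hx
      obtain ⟨n', s', m', hy⟩ := hy
      refine ⟨n + n', Fin.append s s', Fin.append m m', ?_⟩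
      rw [Fin.sum_univ_add]
      simp only [Fin.append_left, Fin.append_right]
      rw [← hx, ← hy]; rfl
  have hinj : Function.Injective F.hom := by
    rw [injective_iff_map_eq_zero]
    intro z hz
    obtain ⟨n, s, m, rfl⟩ := hrep z
    rw [map_sum] at hz
    simp only [hFt] at hz
    obtain ⟨n', c, r, hr, hsr⟩ := relSpan_exists _ _ _ (h (Fin n) m s hz)
    simp only [hsr, tadd', tsm]
    rw [Finset.sum_comm]
    refine Finset.sum_eq_zero fun k _ => ?_
    rw [← tadd, hr, t0]
  have hsurj : Function.Surjective F.hom := by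
    rw [← LinearMap.range_eq_top, ← top_le_iff]
    have : Submodule.span S (Set.range ψ) ≤ LinearMap.range F.hom := by
      rw [Submodule.span_le]
      rintro _ ⟨m, rfl⟩
      exact ⟨tt 1 m, by rw [hFt, one_smul]⟩
    rw [hs] at this
    exact this
  exact ⟨(LinearEquiv.ofBijective F.hom ⟨hinj, hsurj⟩).toModuleIso⟩

end RelGen

section CechFrob

lemma relInj_away {R : Type} [CommRing R] (p : ℕ) [Fact p.Prime] [CharP R p]
    (hfam : ∀ (ι : Type) [Fintype ι] (a : ι → R), RelFam (frobenius R p) a)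
    (L : Type) [CommRing L] [Algebra R L] (M : Submonoid R) [IsLocalization M L] :
    RelInj (R := R) (S := R) (frobenius R p) (fun x : L => x ^ p) := by
  intro ι _ m s hs
  have hp : p.Prime := Fact.out
  obtain ⟨u, hu, y, hy⟩ := loc_denoms M m
  obtain ⟨v, hv, hv'⟩ := loc_common (L := L) (ι := Unit) M (fun _ => ∑ i, s i * y i ^ p)
    (fun _ => 0) (by
      intro _
      simp only [map_sum, map_mul, map_pow, map_zero, ← hy]
      rw [← mul_zero (algebraMap R L u ^ p), ← hs, Finset.mul_sum]
      refine Finset.sum_congr rfl fun i _ => ?_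
      rw [Algebra.smul_def]; ring)
  have h1 := hfam ι (fun i => v * y i) s (by
    have h2 : v * ∑ i, s i * y i ^ p = 0 := by simpa using hv' ()
    have h3 : v ^ p * ∑ i, s i * y i ^ p = 0 := by
      have h4 : v ^ p = v ^ (p - 1) * v := by rw [← pow_succ, Nat.sub_add_cancel hp.pos]
      rw [h4, mul_assoc, h2, mul_zero]
    rw [← h3, Finset.mul_sum]
    refine Finset.sum_congr rfl fun i _ => ?_
    rw [frobenius_def]; ring)
  obtain ⟨n, c, r, hr, hsr⟩ := relSpan_exists _ _ _ h1
  refine relSpan_of_sum _ _ _ c r (fun k => ?_) hsr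
  have hun : IsUnit (algebraMap R L (v * u)) := IsLocalization.map_units L (⟨v * u, mul_mem hv hu⟩ : M)
  apply hun.mul_left_cancel
  have := congrArg (algebraMap R L) (hr k)
  simp only [map_sum, smul_eq_mul, map_mul, map_zero, ← hy] at this
  rw [mul_zero, ← this, Finset.mul_sum]
  refine Finset.sum_congr rfl fun i _ => ?_
  rw [Algebra.smul_def, map_mul]; ring

lemma cechρ_pow {R : Type} [CommRing R] {t : ℕ} (g : Fin t → R) {s s' : Finset (Fin t)}
    (h : s ⊆ s') (x : Localization.Away (cechProd g s)) (n : ℕ) :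
    cechρ g h (x ^ n) = cechρ g h x ^ n :=
  map_pow (IsLocalization.Away.lift (P := Localization.Away (cechProd g s'))
    (g := algebraMap R (Localization.Away (cechProd g s'))) (cechProd g s)
    (IsLocalization.Away.isUnit_of_dvd _ (Finset.prod_dvd_prod_of_subset _ _ _ h))) x n

lemma relInj_pi_aux {R S σ : Type} [CommRing R] [CommRing S] {M M' : σ → Type}
    [∀ a, AddCommGroup (M a)] [∀ a, Module R (M a)] [∀ a, AddCommGroup (M' a)]
    [∀ a, Module S (M' a)] (φ : R →+* S) (ψ : ∀ a, M a →ₛₗ[φ] M' a)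
    (h : ∀ a, RelInj φ (ψ a)) (ι : Type) [Fintype ι] (m : ι → ∀ a, M a) (s : ι → S)
    (u : Finset σ) (hu : ∀ a ∈ u, ∑ i, s i • ψ a (m i a) = 0) :
    ∃ (κ : Type) (_ : Fintype κ) (c : κ → S) (r : κ → ι → R),
      (∀ k, ∀ a ∈ u, ∑ i, r k i • m i a = 0) ∧ ∀ i, s i = ∑ k, c k * φ (r k i) := by
  classical
  induction u using Finset.induction_on with
  | empty =>
    refine ⟨ι, inferInstance, s, fun k => Pi.single k 1, by simp, fun i => ?_⟩
    rw [Finset.sum_eq_single i] <;> simp +contextual [eq_comm]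
  | insert b u hb ih =>
    obtain ⟨κ, _, c, r, hr, hs⟩ := ih fun a ha => hu a (Finset.mem_insert_of_mem ha)
    have h1 := h b κ (fun k => ∑ i, r k i • m i b) c (by
      rw [← hu b (Finset.mem_insert_self _ _)]
      simp only [map_sum, hs, Finset.sum_smul, Finset.smul_sum, LinearMap.map_smulₛₗ, mul_smul]
      exact Finset.sum_comm)
    obtain ⟨n, d, q, hq, hd⟩ := relSpan_exists _ _ _ h1
    refine ⟨Fin n, inferInstance, d, fun l i => ∑ k, q l k * r k i, ?_, ?_⟩
    · intro l a ha
      have e : ∑ i, (∑ k, q l k * r k i) • m i a = ∑ k, q l k • ∑ i, r k i • m i a := by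
        simp only [Finset.sum_smul, Finset.smul_sum, mul_smul]
        exact Finset.sum_comm
      rw [e]
      rcases Finset.mem_insert.1 ha with rfl | ha
      · exact hq l
      · exact Finset.sum_eq_zero fun k _ => by rw [hr k a ha, smul_zero]
    · intro i
      simp only [hs, hd, map_sum, map_mul, Finset.mul_sum, Finset.sum_mul, mul_assoc]
      exact Finset.sum_comm

variable {R : Type} [CommRing R] (p : ℕ) [Fact p.Prime] [CharP R p]

/-- `p`-th power map as a semilinear map. -/
def powSL (L : Type) [CommRing L] [Algebra R L] : L →ₛₗ[frobenius R p] L where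
  toFun x := x ^ p
  map_add' x y := by
    rcases subsingleton_or_nontrivial L with h | h
    · exact Subsingleton.elim _ _
    · have : CharP L p := by
        refine (CharP.charP_iff_prime_eq_zero Fact.out).2 ?_
        rw [← map_natCast (algebraMap R L), CharP.cast_eq_zero R p, map_zero]
      exact add_pow_char x y p
  map_smul' r x := by rw [smul_pow, frobenius_def]

variable {t : ℕ} (g : Fin t → R)

/-- Componentwise `p`-th power map on the Čech terms. -/
def cechΨ (j : ℕ) : CechTerm g j →ₛₗ[frobenius R p] CechTerm g j where
  toFun x := fun s => powSL (R := R) p _ (x s)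
  map_add' x y := by ext s; exact map_add _ _ _
  map_smul' r x := by ext s; exact LinearMap.map_smulₛₗ _ _ _

lemma cechΨ_apply (j : ℕ) (x : CechTerm g j) (s) : cechΨ p g j x s = x s ^ p := rfl

lemma relInj_cech (hfam : ∀ (ι : Type) [Fintype ι] (a : ι → R), RelFam (frobenius R p) a)
    (j : ℕ) : RelInj (frobenius R p) (cechΨ p g j) := by
  intro ι _ m s hs
  obtain ⟨κ, _, c, r, hr, hsr⟩ := relInj_pi_aux (frobenius R p)
    (M := fun s : {s : Finset (Fin t) // s.card = j} => Localization.Away (cechProd g s.1))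
    (fun s => powSL (R := R) p (Localization.Away (cechProd g s.1)))
    (fun s => relInj_away p hfam _ (Submonoid.powers (cechProd g s.1))) ι m s Finset.univ (by
      intro a _
      have := congrFun hs a
      rw [Finset.sum_apply] at this
      exact this)
  refine relSpan_of_sum _ _ _ c r (fun k => ?_) hsr
  ext a
  rw [Finset.sum_apply]
  exact hr k a (Finset.mem_univ _)

lemma cechD_Ψ (j : ℕ) (x : CechTerm g j) :
    cechD g j (cechΨ p g j x) = cechΨ p g (j + 1) (cechD g j x) := by
  ext s'
  simp only [cechD, LinearMap.pi_apply, LinearMap.sum_apply, LinearMap.smul_apply,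
    LinearMap.comp_apply, LinearMap.proj_apply]
  change _ = powSL (R := R) p _ _
  rw [LinearMap.pi_apply, LinearMap.sum_apply, map_sum]
  refine Finset.sum_congr rfl fun l _ => ?_
  rw [LinearMap.smul_apply, LinearMap.map_smulₛₗ, map_pow, map_neg, map_one]
  congr 1
  exact cechρ_pow g _ _ p

end CechFrob

section CechTruncation

lemma mem_cechTrunc {R : Type} [CommRing R] {t : ℕ} (g : Fin t → R) (q j : ℕ) (x : CechTerm g j) :
    x ∈ cechTrunc g q j ↔ ∀ s, ∃ c : R, c • (IsLocalization.Away.invSelf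
      (S := Localization.Away (cechProd g s.1)) (cechProd g s.1)) ^ q = x s := by
  simp [cechTrunc, Submodule.mem_pi, Submodule.mem_span_singleton]

lemma cechTrunc_mono {R : Type} [CommRing R] {t : ℕ} (g : Fin t → R) (j : ℕ) {q q' : ℕ}
    (h : q ≤ q') : cechTrunc g q j ≤ cechTrunc g q' j := by
  intro x hx
  rw [mem_cechTrunc] at hx ⊢
  intro s
  obtain ⟨c, hc⟩ := hx s
  obtain ⟨d, rfl⟩ := Nat.exists_eq_add_of_le h
  refine ⟨c * cechProd g s.1 ^ d, ?_⟩
  rw [← hc, Algebra.smul_def, Algebra.smul_def, map_mul, map_pow, pow_add]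
  have := IsLocalization.Away.mul_invSelf (S := Localization.Away (cechProd g s.1))
    (cechProd g s.1)
  calc _ = algebraMap R (Localization.Away (cechProd g s.1)) c *
        IsLocalization.Away.invSelf (S := Localization.Away (cechProd g s.1)) (cechProd g s.1) ^ q *
        (algebraMap R (Localization.Away (cechProd g s.1)) (cechProd g s.1) *
        IsLocalization.Away.invSelf (S := Localization.Away (cechProd g s.1)) (cechProd g s.1)) ^ d := by
          ring
    _ = _ := by rw [this, one_pow, mul_one]

lemma exists_cechTrunc {R : Type} [CommRing R] {t : ℕ} (g : Fin t → R) (j : ℕ) (x : CechTerm g j) :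
    ∃ q, x ∈ cechTrunc g q j := by
  have h : ∀ s, ∃ (q : ℕ) (c : R), c • (IsLocalization.Away.invSelf
      (S := Localization.Away (cechProd g s.1)) (cechProd g s.1)) ^ q = x s := by
    intro s
    obtain ⟨n, a, ha⟩ := IsLocalization.Away.surj (cechProd g s.1) (x s)
    refine ⟨n, a, ?_⟩
    have := IsLocalization.Away.mul_invSelf (S := Localization.Away (cechProd g s.1))
      (cechProd g s.1)
    rw [Algebra.smul_def, ← ha, mul_assoc, ← mul_pow, this, one_pow, mul_one]
  choose q c hc using h
  refine ⟨Finset.univ.sup q, ?_⟩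
  rw [mem_cechTrunc]
  intro s
  have := cechTrunc_mono g j (q := q s) (q' := Finset.univ.sup q)
    (Finset.le_sup (Finset.mem_univ s))
  have h1 : Pi.single s (x s) ∈ cechTrunc g (q s) j := by
    classical
    rw [mem_cechTrunc]
    intro s'
    by_cases h : s' = s
    · subst h; exact ⟨c s', by rw [hc]; simp⟩
    · exact ⟨0, by simp [h]⟩
  have h2 := (mem_cechTrunc g _ j _).1 (this h1) s
  simpa using h2

/-- standard generators of the truncation -/
noncomputable def cechε {R : Type} [CommRing R] {t : ℕ} (g : Fin t → R) (q j : ℕ)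
    (s : {s : Finset (Fin t) // s.card = j}) : CechTerm g j :=
  Pi.single s ((IsLocalization.Away.invSelf
      (S := Localization.Away (cechProd g s.1)) (cechProd g s.1)) ^ q)

lemma cechε_mem {R : Type} [CommRing R] {t : ℕ} (g : Fin t → R) (q j : ℕ)
    (s : {s : Finset (Fin t) // s.card = j}) : cechε g q j s ∈ cechTrunc g q j := by
  classical
  rw [mem_cechTrunc]
  intro s'
  by_cases h : s' = s
  · subst h; exact ⟨1, by simp [cechε]⟩
  · exact ⟨0, by simp [h, cechε]⟩

lemma cechTrunc_rep {R : Type} [CommRing R] {t : ℕ} (g : Fin t → R) (q j : ℕ)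
    (x : CechTerm g j) (hx : x ∈ cechTrunc g q j) : ∃ c : _ → R, x = ∑ s, c s • cechε g q j s := by
  classical
  choose c hc using (mem_cechTrunc g q j x).1 hx
  refine ⟨c, ?_⟩
  ext s
  rw [Finset.sum_apply, Finset.sum_eq_single s]
  · simp [cechε, hc]
  · intro b _ hb
    simp [cechε, Pi.single_apply, hb.symm]
  · simp

variable {R : Type} [CommRing R] (p : ℕ) [Fact p.Prime] [CharP R p] {t : ℕ} (g : Fin t → R)

lemma cechΨ_ε (q j : ℕ) (s : {s : Finset (Fin t) // s.card = j}) :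
    cechΨ p g j (cechε g q j s) = cechε g (q * p) j s := by
  classical
  have hp : p ≠ 0 := (Fact.out : p.Prime).ne_zero
  ext s'
  rw [cechΨ_apply]
  by_cases h : s' = s
  · subst h; simp [cechε, pow_mul]
  · simp [cechε, h, hp]

lemma cechΨ_trunc (q j : ℕ) (x : CechTerm g j) (hx : x ∈ cechTrunc g q j) :
    cechΨ p g j x ∈ cechTrunc g (q * p) j := by
  obtain ⟨c, rfl⟩ := cechTrunc_rep g q j x hx
  rw [map_sum]
  refine Submodule.sum_mem _ fun s _ => ?_
  rw [LinearMap.map_smulₛₗ, cechΨ_ε]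
  exact Submodule.smul_mem _ _ (cechε_mem _ _ _ _)

lemma cechTrunc_repΨ (q j : ℕ) (x : CechTerm g j) (hx : x ∈ cechTrunc g (q * p) j) :
    ∃ c : _ → R, x = ∑ s, c s • cechΨ p g j (cechε g q j s) := by
  simp only [cechΨ_ε]
  exact cechTrunc_rep _ _ _ _ hx

lemma rel_ker {R S M M' N N' ι : Type} [CommRing R] [CommRing S] [AddCommGroup M] [Module R M]
    [AddCommGroup M'] [Module S M'] [AddCommGroup N] [Module R N]
    [AddCommGroup N'] [Module S N'] [Fintype ι] (φ : R →+* S) (ψ : M →ₛₗ[φ] M') (ψ' : N →ₛₗ[φ] N')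
    (h : RelInj φ ψ') (d : M →ₗ[R] N) (d' : M' →ₗ[S] N') (hd : ∀ x, d' (ψ x) = ψ' (d x))
    (m : ι → M) (c : ι → S) (hc : d' (∑ i, c i • ψ (m i)) = 0) :
    ∃ (n : ℕ) (e : Fin n → S) (r : Fin n → ι → R), (∀ k, d (∑ i, r k i • m i) = 0) ∧
      ∑ i, c i • ψ (m i) = ∑ k, e k • ψ (∑ i, r k i • m i) := by
  obtain ⟨n, e, r, hr, hc'⟩ := relSpan_exists _ _ _ (h ι (fun i => d (m i)) c (by
    simpa [hd] using hc))
  refine ⟨n, e, r, fun k => by simpa using hr k, ?_⟩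
  simp only [hc', map_sum, LinearMap.map_smulₛₗ, Finset.sum_smul, Finset.smul_sum, mul_smul]
  exact Finset.sum_comm

/-- the induced map on cocycles -/
noncomputable def kerΨ (j : ℕ) :
    LinearMap.ker (cechD g j) →ₛₗ[frobenius R p] LinearMap.ker (cechD g j) where
  toFun x := ⟨cechΨ p g j x.1, by
    rw [LinearMap.mem_ker, cechD_Ψ, LinearMap.mem_ker.1 x.2, map_zero]⟩
  map_add' x y := by ext1; exact map_add _ _ _
  map_smul' r x := by ext1; exact LinearMap.map_smulₛₗ _ _ _

lemma prevRange_comap (j : ℕ) :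
    (cechPrevRange g j).comap (LinearMap.ker (cechD g j)).subtype ≤
    ((cechPrevRange g j).comap (LinearMap.ker (cechD g j)).subtype).comap (kerΨ p g j) := by
  intro z hz
  change cechΨ p g j z.1 ∈ cechPrevRange g j
  change z.1 ∈ cechPrevRange g j at hz
  cases j with
  | zero =>
    have h0 : z.1 = 0 := hz
    rw [h0, map_zero]; exact zero_mem _
  | succ j =>
    obtain ⟨y, hy⟩ := hz
    exact ⟨cechΨ p g j y, by rw [cechD_Ψ, hy]⟩


lemma prevRange_span (hfam : ∀ (ι : Type) [Fintype ι] (a : ι → R), RelFam (frobenius R p) a)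
    (j : ℕ) :
    (cechPrevRange g j).comap (LinearMap.ker (cechD g j)).subtype ≤
    Submodule.span R (kerΨ p g j ''
      ((cechPrevRange g j).comap (LinearMap.ker (cechD g j)).subtype)) := by
  intro z hz
  change z.1 ∈ cechPrevRange g j at hz
  cases j with
  | zero =>
    have h0 : z.1 = 0 := hz
    have : z = 0 := Subtype.ext h0
    rw [this]; exact zero_mem _
  | succ j =>
    obtain ⟨y, hy⟩ := hz
    obtain ⟨n, hn⟩ := exists_cechTrunc g j y
    obtain ⟨c, hc⟩ := cechTrunc_repΨ p g n j y
      (cechTrunc_mono g j (Nat.le_mul_of_pos_right n (Fact.out : p.Prime).pos) hn)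
    have hz' : z.1 = ∑ s, c s • cechΨ p g (j + 1) (cechD g j (cechε g n j s)) := by
      rw [← hy, hc, map_sum]
      simp only [map_smul, cechD_Ψ]
    obtain ⟨n', e, r, hr, hs⟩ := rel_ker (frobenius R p) (cechΨ p g (j + 1)) (cechΨ p g (j + 2))
      (relInj_cech p g hfam (j + 2)) (cechD g (j + 1)) (cechD g (j + 1)) (cechD_Ψ p g (j + 1))
      (fun s => cechD g j (cechε g n j s)) c (by rw [← hz']; exact z.2)
    have : z = ∑ k, e k • kerΨ p g (j + 1)
        ⟨∑ s, r k s • cechD g j (cechε g n j s), hr k⟩ := by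
      apply Subtype.ext
      rw [hz', hs, Submodule.coe_sum]
      rfl
    rw [this]
    refine Submodule.sum_mem _ fun k _ => Submodule.smul_mem _ _ (Submodule.subset_span ⟨_, ?_, rfl⟩)
    change ∑ s, r k s • cechD g j (cechε g n j s) ∈ cechPrevRange g (j + 1)
    exact ⟨∑ s, r k s • cechε g n j s, by simp⟩

/-- the induced map on local cohomology -/
noncomputable def cechHΨ (j : ℕ) : cechH g j →ₛₗ[frobenius R p] cechH g j :=
  Submodule.mapQ _ _ (kerΨ p g j) (prevRange_comap p g j)

lemma relInj_cechH (hfam : ∀ (ι : Type) [Fintype ι] (a : ι → R), RelFam (frobenius R p) a)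
    (j : ℕ) : RelInj (frobenius R p) (cechHΨ p g j) :=
  relInj_quot _ (kerΨ p g j) (relInj_submodule _ _ (relInj_cech p g hfam j) _ _ _ fun _ => rfl)
    _ _ _ (prevRange_span p g hfam j)

lemma cechHΨ_trunc (q j : ℕ) (x : cechH g j) (hx : x ∈ cechHTrunc g q j) :
    cechHΨ p g j x ∈ cechHTrunc g (q * p) j := by
  obtain ⟨z, hz, rfl⟩ := hx
  exact ⟨kerΨ p g j z, cechΨ_trunc p g q j _ hz, rfl⟩

lemma cechHΨ_span (hfam : ∀ (ι : Type) [Fintype ι] (a : ι → R), RelFam (frobenius R p) a)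
    (q j : ℕ) (x : cechH g j) (hx : x ∈ cechHTrunc g (q * p) j) :
    ∃ (n : ℕ) (e : Fin n → R) (y : Fin n → cechHTrunc g q j),
      x = ∑ k, e k • cechHΨ p g j (y k) := by
  obtain ⟨z, hz, rfl⟩ := hx
  obtain ⟨c, hc⟩ := cechTrunc_repΨ p g q j z.1 hz
  obtain ⟨n', e, r, hr, hs⟩ := rel_ker (frobenius R p) (cechΨ p g j) (cechΨ p g (j + 1))
      (relInj_cech p g hfam (j + 1)) (cechD g j) (cechD g j) (cechD_Ψ p g j)
      (fun s => cechε g q j s) c (by rw [← hc]; exact z.2)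
  let w : Fin n' → LinearMap.ker (cechD g j) := fun k => ⟨∑ s, r k s • cechε g q j s, hr k⟩
  have : z = ∑ k, e k • kerΨ p g j (w k) := by
    apply Subtype.ext
    rw [hc, hs, Submodule.coe_sum]
    rfl
  refine ⟨n', e, fun k => ⟨Submodule.mkQ _ (w k), ⟨w k, ?_, rfl⟩⟩, ?_⟩
  · change ∑ s, r k s • cechε g q j s ∈ cechTrunc g q j
    exact Submodule.sum_mem _ fun s _ => Submodule.smul_mem _ _ (cechε_mem _ _ _ _)
  · rw [this, map_sum]
    refine Finset.sum_congr rfl fun k _ => ?_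
    rw [map_smul]
    rfl

/-- the restricted map -/
noncomputable def truncΨ (q j : ℕ) :
    cechHTrunc g q j →ₛₗ[frobenius R p] cechHTrunc g (q * p) j where
  toFun x := ⟨cechHΨ p g j x.1, cechHΨ_trunc p g q j x.1 x.2⟩
  map_add' x y := by ext1; exact map_add _ _ _
  map_smul' r x := by ext1; exact LinearMap.map_smulₛₗ _ _ _

theorem cech_frob_iso (hfam : ∀ (ι : Type) [Fintype ι] (a : ι → R), RelFam (frobenius R p) a)
    (q j : ℕ) : Nonempty
      ((ModuleCat.extendScalars (frobenius R p)).obj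
          (ModuleCat.of R ↥(cechHTrunc g q j)) ≅
        ModuleCat.of R ↥(cechHTrunc g (q * p) j)) := by
  refine iso_of_relInj _ (truncΨ p g q j)
    (relInj_submodule _ _ (relInj_cechH p g hfam j) _ _ _ fun _ => rfl) ?_
  rw [eq_top_iff]
  rintro x -
  obtain ⟨n, e, y, hx⟩ := cechHΨ_span p g hfam q j x.1 x.2
  have : x = ∑ k, e k • truncΨ p g q j (y k) := by
    apply Subtype.ext
    rw [hx, Submodule.coe_sum]
    rfl
  rw [this]
  exact Submodule.sum_mem _ fun k _ => Submodule.smul_mem _ _ (Submodule.subset_span ⟨_, rfl⟩)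

end CechTruncation

section CechParts
variable {R : Type} [CommRing R] {t : ℕ} (g : Fin t → R)

theorem cech_part_one (q j : ℕ) : Nonempty
      (↥(cechHTrunc g q j) ≃ₗ[R]
        ↥(LinearMap.ker (cechD g j) ⊓ cechTrunc g q j) ⧸
          Submodule.comap (LinearMap.ker (cechD g j) ⊓ cechTrunc g q j).subtype
            (cechPrevRange g j)) := by
  let f : ↥(LinearMap.ker (cechD g j) ⊓ cechTrunc g q j) →ₗ[R] cechH g j :=
    (Submodule.comap (LinearMap.ker (cechD g j)).subtype (cechPrevRange g j)).mkQ.comp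
      (Submodule.inclusion inf_le_left)
  have hker : LinearMap.ker f =
      Submodule.comap (LinearMap.ker (cechD g j) ⊓ cechTrunc g q j).subtype
        (cechPrevRange g j) := by
    ext x
    rw [LinearMap.mem_ker, LinearMap.comp_apply, Submodule.mkQ_apply,
      Submodule.Quotient.mk_eq_zero]
    rfl
  have hrange : LinearMap.range f = cechHTrunc g q j := by
    ext x
    constructor
    · rintro ⟨y, rfl⟩
      exact ⟨Submodule.inclusion inf_le_left y, y.2.2, rfl⟩
    · rintro ⟨z, hz, rfl⟩
      exact ⟨⟨z.1, z.2, hz⟩, rfl⟩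
  exact ⟨((Submodule.quotEquivOfEq _ _ hker.symm).trans
    (f.quotKerEquivRange.trans (LinearEquiv.ofEq _ _ hrange))).symm⟩

theorem cech_part_three [IsNoetherianRing R] (q j : ℕ) :
    Module.Finite R ↥(cechHTrunc g q j) := by
  have h1 : cechTrunc g q j = Submodule.span R (Set.range (cechε g q j)) := by
    apply le_antisymm
    · intro x hx
      obtain ⟨c, rfl⟩ := cechTrunc_rep g q j x hx
      exact Submodule.sum_mem _ fun s _ => Submodule.smul_mem _ _ (Submodule.subset_span ⟨s, rfl⟩)
    · rw [Submodule.span_le]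
      rintro _ ⟨s, rfl⟩
      exact cechε_mem g q j s
  have h2 : (cechTrunc g q j).FG := by
    rw [h1]; exact Submodule.fg_span (Set.finite_range _)
  have h3 : Module.Finite R (cechTrunc g q j) := Module.Finite.iff_fg.2 h2
  have h4 : (LinearMap.ker (cechD g j) ⊓ cechTrunc g q j).FG := by
    have : IsNoetherian R (cechTrunc g q j) := isNoetherian_of_isNoetherianRing_of_finite R _
    exact (isNoetherian_submodule.1 this) _ inf_le_right
  have h5 : Module.Finite R ↥(LinearMap.ker (cechD g j) ⊓ cechTrunc g q j) :=
    Module.Finite.iff_fg.2 h4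
  obtain ⟨E⟩ := cech_part_one g q j
  exact Module.Finite.equiv E.symm

theorem cech_part_four (p : ℕ) (hp : 1 < p) (j : ℕ) :
    (⨆ e : ℕ, cechHTrunc g (p ^ e) j) = ⊤ := by
  rw [eq_top_iff]
  rintro x -
  obtain ⟨z, rfl⟩ := Submodule.mkQ_surjective _ x
  obtain ⟨q, hq⟩ := exists_cechTrunc g j z.1
  refine Submodule.mem_iSup_of_mem q ⟨z, ?_, rfl⟩
  exact cechTrunc_mono g j (Nat.lt_pow_self hp).le hq

end CechParts

/-- Let `R` be a noetherian regular ring of characteristic `p`, `I = (g1,…,gt)`, `e ≥ 0`.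
Let `Ȟ^j_e` be the image of `H^j(Č^•(g;R)_e)` in `H^j_I(R)`. Then
`Ȟ^j_e ≅ ker δ^j_e / (im δ^{j-1} ∩ ker δ^j_e)`, `F(Ȟ^j_e) ≅ Ȟ^j_{e+1}`, each `Ȟ^j_e` is a
finitely generated `R`-module, and `H^j_I(R) = ∪_e Ȟ^j_e`. -/
theorem stmt_12 {R : Type} [CommRing R] (p : ℕ) [Fact p.Prime] [CharP R p]
    (hreg : IsRegularRingStmt R) {t : ℕ} (g : Fin t → R) (j : ℕ) :
    (∀ e : ℕ, Nonempty
      (↥(cechHTrunc g (p ^ e) j) ≃ₗ[R]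
        ↥(LinearMap.ker (cechD g j) ⊓ cechTrunc g (p ^ e) j) ⧸
          Submodule.comap (LinearMap.ker (cechD g j) ⊓ cechTrunc g (p ^ e) j).subtype
            (cechPrevRange g j))) ∧
    (∀ e : ℕ, Nonempty
      ((ModuleCat.extendScalars (frobenius R p)).obj
          (ModuleCat.of R ↥(cechHTrunc g (p ^ e) j)) ≅
        ModuleCat.of R ↥(cechHTrunc g (p ^ (e + 1)) j))) ∧
    (∀ e : ℕ, Module.Finite R ↥(cechHTrunc g (p ^ e) j)) ∧
    (⨆ e : ℕ, cechHTrunc g (p ^ e) j) = ⊤ := by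
  have hp : p.Prime := Fact.out
  have := hreg.1
  refine ⟨fun e => cech_part_one g (p ^ e) j, fun e => ?_, fun e => cech_part_three g (p ^ e) j,
    cech_part_four g p hp.one_lt j⟩
  rw [pow_succ]
  exact cech_frob_iso p g (fun ι _ a => relFam_regular p R hreg ι a) (p ^ e) j
end
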